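/- arXiv:2009.09148 — 3 statements merged into one kernel-verified Lean document; each statement's English description precedes it below -/
import Mathlib

section
/- Let μ ∈ (0,∞) be fixed and let F_T, F_A, F_B be probability distributions on [0,∞) (the distributions of nonnegative random variables T, A, B). Then the conditions 0 ≤ E[T] < 1, E[A] = 1, E[A²] < ∞ and 0 ≤ E[B] < ∞ hold if and only if the functional equation F̂(s) = ∫₀^∞ exp(−a·σ_B(σ(s))) dF_A(a) for all s ≥ 0 has exactly one solution: a probability distribution F on [0,∞) with mean μ and finite second moment (here σ is built from the unknown F, F_T and μ, and σ_B from F_B). Moreover, the unique solution F satisfies Var[F] = ((Var[A] + E[B] + E[T])/(1 − E[T]))·μ². -/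
/-!
For a distribution on `[0,∞)` with mean `μ` and finite second moment, the transform lies between
`1 - μ s` and `1 - μ s + C s²`. Write the functional equation as `F̂ = Op F̂`, with
`Op φ = F̂_A ∘ σ_B ∘ σ_φ`. By Fubini, `σ_B(s) = ∫ (1 - e^{-bs})/b dF_B(b)`, so `σ_B` is the same
construction as `σ`, applied to the transform of the point mass at `1` (`sigmaB_eq`).

*Necessity and the variance.* For a solution with `φ = F̂`, let `σ = σ(s)` and `g = σ_B(σ)`. The
first-order terms of the equation as `s → 0` give `E[A] = 1`. Then
`φ(s) - 1 + μ s = (F̂_A(g) - 1 + g) + (σ - g) + (μ s - σ)` is a sum of nonnegative terms, and division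
by `s²` gives, as an identity in `[0,∞]`,
`E[F²]/2 = μ²/2 E[A²] + μ²/2 E[B] + E[F²]/2 E[T]`.
The limits are taken by Fatou's lemma together with a pointwise upper bound
(`lintegral_sandwich`), so no moment is assumed finite beforehand. Since `0 < E[F²] < ∞`, all moments
on the right are finite, and `E[A²] ≥ 1` forces `E[T] < 1`; solving for `E[F²]` gives the variance
(`second_order`).

*Sufficiency.* If the moment conditions hold, `|φ - ψ| ≤ D s²` implies `|Op φ - Op ψ| ≤ D E[T] s²`,
because `σ_B` and `F̂_A` are 1-Lipschitz (`Op_sub_le`). This gives uniqueness (`sol_unique`), and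
convergence of the iterates of `Op` started at `e^{-μ s}`. The bounds
`1 - μ s ≤ φ ≤ 1 - μ s + C s²` are preserved for `C = μ²(E[A²] + E[B])/(2(1 - E[T]))` (`Op_good`).

*Transforms.* The limit of the iterates must be recognized as the transform of a probability
measure. Membership in the class of transforms is expressed in dual form: `φ` is nonnegative on
finite exponential sums that are nonnegative on `[0,∞)` (`CM`). This class is closed under products,
mixtures, pointwise limits and composition with Bernstein functions, hence under `Op`. Under
`y = e^{-x}` such a `φ` is a positive functional on the span of the powers `y ^ s` in `C([0,1])`;
M. Riesz's extension theorem and the Riesz–Markov–Kakutani theorem represent it by a measure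
(`CM.exists_measure`).
-/

open MeasureTheory

/-- Laplace–Stieltjes transform of a (nonnegative) probability distribution. -/
noncomputable def LS (F : Measure ℝ) (s : ℝ) : ℝ := ∫ x, Real.exp (-(s * x)) ∂F

/-- The Bernstein function `σ` built from the unknown `F`, `F_T` and `μ`:
`σ(s) = ∫₀^∞ (1 − F̂(ts))/t dF_T(t)`, with the integrand at `t = 0` equal to `μ s`. -/
noncomputable def sigmaT (F FT : Measure ℝ) (μ : ℝ) (s : ℝ) : ℝ :=
  ∫ t, (if t = 0 then μ * s else (1 - LS F (t * s)) / t) ∂FT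

/-- The Bernstein function `σ_B(s) = ∫₀^s F̂_B(t) dt`. -/
noncomputable def sigmaB (FB : Measure ℝ) (s : ℝ) : ℝ := ∫ t in (0:ℝ)..s, LS FB t

/-- The moment conditions: `E[T] < 1`, `E[A] = 1`, `E[A²] < ∞`, `E[B] < ∞`. -/
def Cond (FT FA FB : Measure ℝ) : Prop :=
  (∫⁻ t, ENNReal.ofReal t ∂FT) < 1 ∧ (∫⁻ a, ENNReal.ofReal a ∂FA) = 1 ∧
  (∫⁻ a, ENNReal.ofReal (a ^ 2) ∂FA) < ⊤ ∧ (∫⁻ b, ENNReal.ofReal b ∂FB) < ⊤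

/-- `F` is a solution: a probability distribution on `[0,∞)` with mean `μ`, finite second
moment, satisfying the power-mixture functional equation
`F̂(s) = ∫₀^∞ exp(−a σ_B(σ(s))) dF_A(a)` for all `s ≥ 0`. -/
def Sol (FT FA FB : Measure ℝ) (μ : ℝ) (F : Measure ℝ) : Prop :=
  IsProbabilityMeasure F ∧ F (Set.Iio 0) = 0 ∧ (∫ x, x ∂F) = μ ∧
  Integrable (fun x => x ^ 2) F ∧
  ∀ s : ℝ, 0 ≤ s → LS F s = ∫ a, Real.exp (-(a * sigmaB FB (sigmaT F FT μ s))) ∂FA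

open Filter Topology Set
open scoped NNReal ENNReal

/-! ### Laplace transforms: representation and uniqueness -/

/-- `φ` is a Laplace transform, in dual form: every finite exponential sum `∑ cᵢ e^{-sᵢ x}` that is
nonnegative on `[0,∞)` satisfies `∑ cᵢ φ(sᵢ) ≥ 0`. Only the values of `φ` on `[0,∞)` matter. For
continuous `φ` this is equivalent to complete monotonicity on `[0,∞)`, but it is visibly stable
under products, mixtures, pointwise limits and composition with Bernstein functions. -/
def CM (φ : ℝ → ℝ) : Prop :=
  ∀ (ι : Type) (S : Finset ι) (c s : ι → ℝ), (∀ i, 0 ≤ s i) →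
    (∀ x, 0 ≤ x → 0 ≤ ∑ i ∈ S, c i * Real.exp (-(s i * x))) →
    0 ≤ ∑ i ∈ S, c i * φ (s i)

/-- The function `y ↦ y ^ s` on `[0,1]`, which is `x ↦ e^{-s x}` after the substitution `y = e^{-x}`. -/
noncomputable def powI (s : ℝ≥0) : C(unitInterval, ℝ) where
  toFun y := (y : ℝ) ^ (s : ℝ)
  continuous_toFun := (Real.continuous_rpow_const s.2).comp continuous_subtype_val

lemma powI_exp (s : ℝ≥0) (x : ℝ) (hx : 0 ≤ x) :
    powI s ⟨Real.exp (-x), (Real.exp_pos _).le, by simpa using hx⟩ = Real.exp (-(s * x)) := by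
  change (Real.exp (-x)) ^ (s : ℝ) = _
  rw [← Real.exp_mul]; ring_nf

/-- The functional `y ^ s ↦ φ s` is well defined and positive on the span of the powers, by `CM`;
the span contains the constants, so M. Riesz's theorem extends it to a positive functional on
`C([0,1])`. -/
lemma CM.exists_functional {φ : ℝ → ℝ} (h : CM φ) :
    ∃ g : C(unitInterval, ℝ) →ₗ[ℝ] ℝ, (∀ s : ℝ≥0, g (powI s) = φ s) ∧
      ∀ f : C(unitInterval, ℝ), 0 ≤ f → 0 ≤ g f := by
  let T : (ℝ≥0 →₀ ℝ) →ₗ[ℝ] C(unitInterval, ℝ) := Finsupp.linearCombination ℝ powI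
  let N : (ℝ≥0 →₀ ℝ) →ₗ[ℝ] ℝ := Finsupp.linearCombination ℝ (fun s : ℝ≥0 => φ s)
  have key : ∀ c, 0 ≤ T c → 0 ≤ N c := by
    intro c hc
    have : N c = ∑ i ∈ c.support, c i * φ (i : ℝ) := by
      simp [N, Finsupp.linearCombination_apply, Finsupp.sum]
    rw [this]
    refine h ℝ≥0 c.support c (fun i => i) (fun i => i.2) fun x hx => ?_
    have h1 : 0 ≤ (T c) ⟨Real.exp (-x), (Real.exp_pos _).le, by simpa using hx⟩ := hc _
    simp only [T, Finsupp.linearCombination_apply, Finsupp.sum,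
      ContinuousMap.sum_apply, ContinuousMap.smul_apply, smul_eq_mul, powI_exp _ x hx] at h1
    exact h1
  have key0 : ∀ c, T c = 0 → N c = 0 := by
    intro c hc
    refine le_antisymm ?_ (key c hc.ge)
    have := key (-c) (by rw [map_neg, hc, neg_zero])
    rw [map_neg] at this; linarith
  obtain ⟨r, hr⟩ := T.rangeRestrict.exists_rightInverse_of_surjective T.range_rangeRestrict
  have hr' : ∀ y, T (r y) = y := fun y => by
    have := congrArg Subtype.val (LinearMap.congr_fun hr y)
    simpa using this
  let P : PointedCone ℝ C(unitInterval, ℝ) := PointedCone.positive ℝ _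
  obtain ⟨g, hg, hp⟩ := riesz_extension P ⟨LinearMap.range T, N ∘ₗ r⟩ (by
      intro x hx
      refine key _ ?_
      rw [hr']; exact hx) (by
      intro y
      refine ⟨⟨T (Finsupp.single 0 ‖y‖), LinearMap.mem_range_self _ _⟩, ?_⟩
      change (0 : C(unitInterval, ℝ)) ≤ _
      intro t
      change (0 : ℝ) ≤ (T (Finsupp.single 0 ‖y‖) + y) t
      have h1 : powI 0 t = 1 := by simp [powI]
      have h2 := (abs_le.1 ((Real.norm_eq_abs _).symm.le.trans (y.norm_coe_le_norm t))).1
      simp only [T, Finsupp.linearCombination_single, ContinuousMap.add_apply,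
        ContinuousMap.smul_apply, h1, smul_eq_mul]
      linarith)
  refine ⟨g, fun s => ?_, fun f hf => hp f hf⟩
  have h1 : T (Finsupp.single s 1) = powI s := by simp [T]
  have h2 : N (Finsupp.single s 1) = φ s := by simp [N]
  have h3 := hg ⟨powI s, by rw [← h1]; exact LinearMap.mem_range_self _ _⟩
  rw [← h2]
  refine h3.trans ?_
  change N (r _) = _
  rw [← sub_eq_zero, ← map_sub]
  refine key0 _ ?_
  rw [map_sub, hr', sub_eq_zero]
  exact h1.symm

lemma CM.exists_measureI {φ : ℝ → ℝ} (h : CM φ) (h0 : φ 0 = 1) :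
    ∃ m : Measure unitInterval, IsProbabilityMeasure m ∧
      ∀ s : ℝ≥0, ∫ y, powI s y ∂m = φ s := by
  obtain ⟨g, hg, hp⟩ := h.exists_functional
  let Λ : CompactlySupportedContinuousMap unitInterval ℝ →ₚ[ℝ] ℝ :=
    PositiveLinearMap.mk₀
      { toFun := fun f => g f.toContinuousMap
        map_add' := fun a b => by
          rw [← map_add]; rfl
        map_smul' := fun a b => by
          rw [RingHom.id_apply, ← map_smul]; rfl }
      (fun f hf => hp _ hf)
  have hint : ∀ f : C(unitInterval, ℝ), ∫ y, f y ∂(RealRMK.rieszMeasure Λ) = g f := fun f =>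
    RealRMK.integral_rieszMeasure Λ
      (CompactlySupportedContinuousMap.continuousMapEquiv f)
  have h1 : ∫ y, powI 0 y ∂(RealRMK.rieszMeasure Λ) = 1 := by
    rw [hint, hg]; simpa using h0
  refine ⟨RealRMK.rieszMeasure Λ, ⟨?_⟩, fun s => by rw [hint, hg]⟩
  have h2 : ∀ y, powI 0 y = 1 := fun y => by simp [powI]
  simp only [h2, integral_const, smul_eq_mul, mul_one, Measure.real] at h1
  rw [← ENNReal.toReal_eq_one_iff]; exact h1

/-- Bernstein's theorem for the class `CM`: the representing measure on `[0,1]` is carried back to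
`[0,∞)` by `y ↦ -log y`. Continuity of `φ` at `0` says that it has no atom at `y = 0`, that is, no
mass escapes to infinity. -/
theorem CM.exists_measure {φ : ℝ → ℝ} (h : CM φ) (h0 : φ 0 = 1)
    (hc : Tendsto φ (𝓝[>] 0) (𝓝 1)) :
    ∃ F : Measure ℝ, IsProbabilityMeasure F ∧ F (Iio 0) = 0 ∧ ∀ s, 0 ≤ s → LS F s = φ s := by
  obtain ⟨m, hm, hφ⟩ := h.exists_measureI h0
  have hlog : Measurable (fun y : unitInterval => -Real.log y) := by fun_prop
  -- The integral of `y ^ u` tends to the mass of `{0}ᶜ` as `u → 0+`, and to `1` by `hc`.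
  have hnull : ∀ᵐ y ∂m, y ≠ 0 := by
    let u : ℕ → ℝ≥0 := fun n => 1 / ((n : ℝ≥0) + 1)
    have hu : Tendsto (fun n => ((u n : ℝ≥0) : ℝ)) atTop (𝓝[>] 0) := by
      refine tendsto_nhdsWithin_iff.2 ⟨?_, Eventually.of_forall fun n => ?_⟩
      · simpa [u] using (tendsto_one_div_add_atTop_nhds_zero_nat (𝕜 := ℝ))
      · simp only [u, mem_Ioi, NNReal.coe_pos]; positivity
    have h1 : Tendsto (fun n => ∫ y, powI (u n) y ∂m) atTop (𝓝 1) := by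
      simp only [hφ]; exact hc.comp hu
    have h2 : Tendsto (fun n => ∫ y, powI (u n) y ∂m) atTop
        (𝓝 (∫ y, ({0}ᶜ : Set unitInterval).indicator 1 y ∂m)) := by
      refine tendsto_integral_of_dominated_convergence (fun _ => 1)
        (fun n => (powI (u n)).continuous.aestronglyMeasurable) (integrable_const _)
        (fun n => Eventually.of_forall fun y => ?_) (Eventually.of_forall fun y => ?_)
      · change ‖(y : ℝ) ^ ((u n : ℝ≥0) : ℝ)‖ ≤ 1
        rw [Real.norm_of_nonneg (Real.rpow_nonneg y.2.1 _)]
        exact Real.rpow_le_one y.2.1 y.2.2 (u n).2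
      · by_cases hy : y = 0
        · subst hy
          have : ∀ n, powI (u n) 0 = 0 := fun n => by
            change (0 : ℝ) ^ ((u n : ℝ≥0) : ℝ) = 0
            apply Real.zero_rpow
            simp only [u]; positivity
          simp [this]
        · have hy' : (0 : ℝ) < y := lt_of_le_of_ne y.2.1 (fun h => hy (Subtype.ext h.symm))
          have := ((Real.continuousAt_const_rpow hy'.ne').tendsto (x := 0)).comp
            (tendsto_nhdsWithin_iff.1 hu).1
          simp only [Real.rpow_zero] at this
          simpa [hy] using! this
    have h3 := tendsto_nhds_unique h1 h2
    rw [integral_indicator_one (measurableSet_singleton _).compl] at h3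
    have h4 : m ({0}ᶜ) = 1 := by
      rw [← ENNReal.toReal_eq_one_iff]; exact h3.symm
    rw [← prob_compl_eq_zero_iff (measurableSet_singleton _).compl, compl_compl] at h4
    rw [ae_iff]; simpa using h4
  refine ⟨m.map (fun y : unitInterval => -Real.log y), Measure.isProbabilityMeasure_map hlog.aemeasurable, ?_, ?_⟩
  · rw [Measure.map_apply hlog measurableSet_Iio]
    convert measure_empty (μ := m)
    ext y
    simp only [mem_preimage, mem_Iio, mem_empty_iff_false, iff_false, not_lt]
    have := Real.log_nonpos y.2.1 y.2.2
    linarith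
  · intro s hs
    rw [LS, integral_map hlog.aemeasurable (by fun_prop)]
    rw [← NNReal.coe_mk s hs, ← hφ]
    refine integral_congr_ae (hnull.mono fun y hy => ?_)
    have hy' : (0 : ℝ) < y := lt_of_le_of_ne y.2.1 (fun h => hy (Subtype.ext h.symm))
    change _ = (y : ℝ) ^ (s : ℝ)
    rw [Real.rpow_def_of_pos hy']
    simp only [NNReal.coe_mk]; ring_nf

/-- A distribution on `[0,∞)` is determined by its Laplace transform: under `y = e^{-x}` the values
at the integers are the moments of a measure on `[0,1]`, and polynomials are dense there. -/
theorem LS_inj {F G : Measure ℝ} [IsProbabilityMeasure F] [IsProbabilityMeasure G]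
    (hF : F (Iio 0) = 0) (hG : G (Iio 0) = 0) (h : ∀ s, 0 ≤ s → LS F s = LS G s) : F = G := by
  let e : ℝ → unitInterval := fun x => projIcc 0 1 zero_le_one (Real.exp (-x))
  have he : Continuous e := continuous_projIcc.comp (by fun_prop)
  have heq : ∀ x, 0 ≤ x → (e x : ℝ) = Real.exp (-x) := fun x hx => by
    have : Real.exp (-x) ∈ Icc (0:ℝ) 1 := ⟨(Real.exp_pos _).le, by simpa using hx⟩
    simp only [e]; rw [projIcc_of_mem zero_le_one this]
  have back : ∀ (K : Measure ℝ), K (Iio 0) = 0 →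
      (K.map e).map (fun y : unitInterval => -Real.log y) = K := by
    intro K hK
    rw [Measure.map_map (by fun_prop) he.measurable]
    conv_rhs => rw [← Measure.map_id (μ := K)]
    refine Measure.map_congr ?_
    have : ∀ᵐ x ∂K, 0 ≤ x := by rw [ae_iff]; simpa only [not_le] using! hK
    filter_upwards [this] with x hx
    simp [Function.comp, heq x hx]
  have hmom : ∀ (K : Measure ℝ), K (Iio 0) = 0 → ∀ n : ℕ,
      ∫ y, ((y : ℝ)) ^ n ∂(K.map e) = LS K n := by
    intro K hK n
    rw [integral_map he.measurable.aemeasurable (by fun_prop), LS]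
    have : ∀ᵐ x ∂K, 0 ≤ x := by rw [ae_iff]; simpa only [not_le] using! hK
    refine integral_congr_ae (this.mono fun x hx => ?_)
    change (e x : ℝ) ^ n = _
    rw [heq x hx, ← Real.exp_nat_mul]; ring_nf
  have hPF : IsProbabilityMeasure (F.map e) :=
    Measure.isProbabilityMeasure_map he.measurable.aemeasurable
  have hPG : IsProbabilityMeasure (G.map e) :=
    Measure.isProbabilityMeasure_map he.measurable.aemeasurable
  suffices F.map e = G.map e by rw [← back F hF, ← back G hG, this]
  have hi : ∀ (K : Measure unitInterval) [IsProbabilityMeasure K] (f : C(unitInterval, ℝ)),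
      Integrable f K := fun K _ f =>
    (BoundedContinuousFunction.mkOfCompact f).integrable K
  have hcont : ∀ (K : Measure unitInterval) [IsProbabilityMeasure K],
      Continuous fun f : C(unitInterval, ℝ) => ∫ y, f y ∂K := by
    intro K _
    refine LipschitzWith.continuous (K := 1) (LipschitzWith.of_dist_le_mul fun f g => ?_)
    rw [Real.dist_eq, ← integral_sub (hi K f) (hi K g)]
    have h1 : ‖∫ y, (f y - g y) ∂K‖ ≤ dist f g * K.real univ :=
      norm_integral_le_of_norm_le_const (Eventually.of_forall fun y => by
        rw [← dist_eq_norm]; exact ContinuousMap.dist_apply_le_dist y)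
    simpa using h1
  refine ext_of_forall_integral_eq_of_IsFiniteMeasure fun f => ?_
  have hmem : f.toContinuousMap ∈ (polynomialFunctions unitInterval).topologicalClosure := by
    rw [polynomialFunctions_closure_eq_top']; trivial
  have hcl : IsClosed {f : C(unitInterval, ℝ) | ∫ y, f y ∂(F.map e) = ∫ y, f y ∂(G.map e)} :=
    isClosed_eq (hcont _) (hcont _)
  refine closure_minimal ?_ hcl hmem
  rintro _ ⟨p, -, rfl⟩
  have hpoly : ∀ (K : Measure unitInterval) [IsProbabilityMeasure K],
      ∫ y : unitInterval, p.eval (y : ℝ) ∂K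
        = ∑ i ∈ Finset.range (p.natDegree + 1), p.coeff i * ∫ y : unitInterval, (y : ℝ) ^ i ∂K := by
    intro K _
    simp only [Polynomial.eval_eq_sum_range]
    rw [integral_finsetSum]
    · simp only [integral_const_mul]
    · intro i _
      exact hi K ⟨fun y => p.coeff i * (y : ℝ) ^ i, by fun_prop⟩
  change ∫ y : unitInterval, p.eval (y : ℝ) ∂(F.map e) = ∫ y : unitInterval, p.eval (y : ℝ) ∂(G.map e)
  rw [hpoly, hpoly]
  refine Finset.sum_congr rfl fun i _ => ?_
  rw [hmom F hF, hmom G hG, h _ (Nat.cast_nonneg i)]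

/-! ### Closure properties of `CM` and Bernstein functions -/

lemma CM.exp_neg {x : ℝ} (hx : 0 ≤ x) : CM (fun s => Real.exp (-(s * x))) :=
  fun _ _ _ _ _ h => h x hx

lemma CM.const {a : ℝ} (ha : 0 ≤ a) : CM (fun _ => a) := by
  intro ι S c s _ h
  have := h 0 le_rfl
  simp only [mul_zero, neg_zero, Real.exp_zero, mul_one] at this
  rw [← Finset.sum_mul]; exact mul_nonneg this ha

lemma CM.add {φ ψ : ℝ → ℝ} (h1 : CM φ) (h2 : CM ψ) : CM (fun s => φ s + ψ s) := by
  intro ι S c s hs h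
  simp only [mul_add, Finset.sum_add_distrib]
  exact add_nonneg (h1 ι S c s hs h) (h2 ι S c s hs h)

/-- Absorb `φ` into the coefficients: the shifted sum `∑ cᵢ e^{-sᵢ x} e^{-sᵢ y}` is nonnegative in `y`
for each fixed `x`. -/
lemma CM.mul {φ ψ : ℝ → ℝ} (h1 : CM φ) (h2 : CM ψ) : CM (fun s => φ s * ψ s) := by
  intro ι S c s hs h
  simp only [← mul_assoc]
  refine h2 ι S (fun i => c i * φ (s i)) s hs fun x hx => ?_
  have := h1 ι S (fun i => c i * Real.exp (-(s i * x))) s hs fun y hy => ?_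
  · simpa only [mul_right_comm] using this
  · have := h (x + y) (add_nonneg hx hy)
    simpa only [mul_assoc, ← Real.exp_add, ← neg_add, ← mul_add] using this

lemma CM.pow {φ : ℝ → ℝ} (h : CM φ) (n : ℕ) : CM (fun s => φ s ^ n) := by
  induction n with
  | zero => simpa using CM.const zero_le_one
  | succ n ih => simpa only [pow_succ] using ih.mul h

lemma CM.of_tendsto {φ : ℝ → ℝ} {f : ℕ → ℝ → ℝ} (h : ∀ n, CM (f n))
    (hl : ∀ s, 0 ≤ s → Tendsto (fun n => f n s) atTop (𝓝 (φ s))) : CM φ := by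
  intro ι S c s hs hx
  refine ge_of_tendsto' (tendsto_finsetSum S fun i _ => (hl (s i) (hs i)).const_mul (c i))
    fun n => h n ι S c s hs hx

lemma CM.exp {φ : ℝ → ℝ} (h : CM φ) : CM (fun s => Real.exp (φ s)) := by
  refine CM.of_tendsto (f := fun n s => (1 + φ s / n) ^ n) (fun n => ?_)
    fun s _ => Real.tendsto_one_add_div_pow_exp _
  refine CM.pow (CM.add (CM.const zero_le_one) ?_) n
  simpa only [div_eq_mul_inv] using h.mul (CM.const (a := (n : ℝ)⁻¹) (by positivity))

lemma CM.integral {K : Measure ℝ} {φ : ℝ → ℝ → ℝ} (h : ∀ᵐ a ∂K, CM (φ a))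
    (hi : ∀ s, 0 ≤ s → Integrable (fun a => φ a s) K) : CM (fun s => ∫ a, φ a s ∂K) := by
  intro ι S c s hs hx
  simp only [← integral_const_mul]
  rw [← integral_finsetSum _ fun i _ => (hi (s i) (hs i)).const_mul (c i)]
  exact integral_nonneg_of_ae (h.mono fun a ha => ha ι S c s hs hx)

/-- Bernstein functions, characterized by `e^{-a g}` being in `CM` for every `a ≥ 0`. Nonnegativity
of `g` is required separately where it is needed. -/
def BF (g : ℝ → ℝ) : Prop := ∀ a, 0 ≤ a → CM (fun s => Real.exp (-(a * g s)))

lemma CM.comp {φ g : ℝ → ℝ} (h : CM φ) (hg : BF g) (hg0 : ∀ s, 0 ≤ s → 0 ≤ g s) :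
    CM (fun s => φ (g s)) := by
  intro ι S c s hs hx
  refine h ι S c (fun i => g (s i)) (fun i => hg0 _ (hs i)) fun x h0 => ?_
  simpa only [mul_comm] using hg x h0 ι S c s hs hx

lemma BF.const_mul {g : ℝ → ℝ} (h : BF g) {t : ℝ} (ht : 0 ≤ t) : BF (fun s => t * g s) := by
  intro a ha
  simpa only [mul_assoc] using h (a * t) (mul_nonneg ha ht)

lemma BF.id : BF (fun s => s) := fun a ha => by
  simpa only [mul_comm] using CM.exp_neg ha

lemma BF.of_tendsto {g : ℝ → ℝ} {f : ℕ → ℝ → ℝ} (h : ∀ n, BF (f n))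
    (hl : ∀ s, 0 ≤ s → Tendsto (fun n => f n s) atTop (𝓝 (g s))) : BF g := fun a ha =>
  CM.of_tendsto (fun n => h n a ha) fun s hs =>
    (Real.continuous_exp.tendsto _).comp ((hl s hs).const_mul a).neg

/-- For a finite constant `c`, `e^{-a(c - φ)} = e^{-ac} e^{aφ}` is in `CM` by the exponential series.
No relation between `c` and `φ` is needed. -/
lemma CM.bf_sub {φ : ℝ → ℝ} (h : CM φ) (c : ℝ) : BF (fun s => c - φ s) := by
  intro a ha
  have := (CM.const (Real.exp_pos (-(a * c))).le).mul ((CM.const ha).mul h).exp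
  simp only [← Real.exp_add] at this
  convert this using 3
  ring

lemma CM.sum2 {φ : ℝ → ℝ} (h : CM φ) {c s : Fin 2 → ℝ} (hs : ∀ i, 0 ≤ s i)
    (hx : ∀ x, 0 ≤ x → 0 ≤ c 0 * Real.exp (-(s 0 * x)) + c 1 * Real.exp (-(s 1 * x))) :
    0 ≤ c 0 * φ (s 0) + c 1 * φ (s 1) := by
  have := h (Fin 2) Finset.univ c s hs (by simpa [Fin.sum_univ_two] using hx)
  simpa [Fin.sum_univ_two] using this

lemma CM.nonneg {φ : ℝ → ℝ} (h : CM φ) {s : ℝ} (hs : 0 ≤ s) : 0 ≤ φ s := by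
  have := h Unit Finset.univ (fun _ => 1) (fun _ => s) (fun _ => hs)
    (fun x _ => by simp; positivity)
  simpa using this

lemma CM.anti {φ : ℝ → ℝ} (h : CM φ) {s t : ℝ} (hs : 0 ≤ s) (hst : s ≤ t) : φ t ≤ φ s := by
  have := h.sum2 (c := ![1, -1]) (s := ![s, t])
    (by intro i; fin_cases i <;> simp [hs, hs.trans hst]) (fun x hx => by
      have : Real.exp (-(t * x)) ≤ Real.exp (-(s * x)) := by gcongr
      simpa using! this)
  simp at this; linarith

/-! ### The operator `σ` on normalized transforms -/

/-- `φ` behaves like the Laplace transform of a distribution with mean `m` and second moment at most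
`2 C`: it is in `CM` and `1 - m s ≤ φ s ≤ 1 - m s + C s²` on `[0,∞)`. -/
structure Good (m C : ℝ) (φ : ℝ → ℝ) : Prop where
  cm : CM φ
  ge : ∀ s, 0 ≤ s → 1 - m * s ≤ φ s
  le : ∀ s, 0 ≤ s → φ s ≤ 1 - m * s + C * s ^ 2

namespace Good
variable {m C : ℝ} {φ : ℝ → ℝ}

lemma zero (h : Good m C φ) : φ 0 = 1 := by
  have h1 := h.ge 0 le_rfl
  have h2 := h.le 0 le_rfl
  simp at h1 h2; linarith

lemma le_one (h : Good m C φ) {s : ℝ} (hs : 0 ≤ s) : φ s ≤ 1 := by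
  have := h.cm.anti le_rfl hs
  rwa [h.zero] at this

/-- From `(1 - e^{-ux})(1 - e^{-sx}) ≥ 0`: the increments of `φ` are largest at `0`. -/
lemma lip (h : Good m C φ) {s u : ℝ} (hs : 0 ≤ s) (hu : 0 ≤ u) : φ s - φ (s + u) ≤ m * u := by
  have := h.cm (Fin 4) Finset.univ ![1, -1, -1, 1] ![0, u, s, s + u]
    (by intro i; fin_cases i <;> simp <;> linarith) (fun x hx => by
      have h1 : Real.exp (-(u * x)) ≤ 1 := by simpa using mul_nonneg hu hx
      have h2 : Real.exp (-(s * x)) ≤ 1 := by simpa using mul_nonneg hs hx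
      have h3 : Real.exp (-((s + u) * x)) = Real.exp (-(s * x)) * Real.exp (-(u * x)) := by
        rw [← Real.exp_add]; ring_nf
      simp [Fin.sum_univ_four, h3]
      nlinarith)
  simp [Fin.sum_univ_four, h.zero] at this
  have := h.ge u hu
  linarith

lemma continuousOn (h : Good m C φ) : ContinuousOn φ (Ici 0) := by
  refine LipschitzOnWith.continuousOn (K := m.toNNReal)
    (LipschitzOnWith.of_le_add_mul _ fun x hx y hy => ?_)
  simp only [mem_Ici] at hx hy
  rcases le_total x y with hxy | hxy
  · have := h.lip hx (sub_nonneg.2 hxy)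
    rw [add_sub_cancel] at this
    rw [Real.dist_eq, abs_sub_comm, abs_of_nonneg (sub_nonneg.2 hxy)]
    have h2 := mul_le_mul_of_nonneg_right (Real.le_coe_toNNReal m) (sub_nonneg.2 hxy)
    linarith
  · have := h.cm.anti hy hxy
    have : 0 ≤ (m.toNNReal : ℝ) * dist x y := by positivity
    linarith

lemma meas (h : Good m C φ) {K : Measure ℝ} {f : ℝ → ℝ} (hf : Measurable f)
    (h0 : ∀ᵐ t ∂K, 0 ≤ f t) : AEStronglyMeasurable (fun t => φ (f t)) K := by
  have h1 : Continuous fun x => φ (max x 0) :=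
    h.continuousOn.comp_continuous (by fun_prop) fun x => le_max_right x 0
  refine (h1.measurable.comp hf).aestronglyMeasurable.congr (h0.mono fun t ht => ?_)
  simp [max_eq_left ht]

end Good

lemma ae_nonneg {K : Measure ℝ} (hK : K (Iio 0) = 0) : ∀ᵐ t ∂K, 0 ≤ t := by
  rw [ae_iff]; simpa only [not_le] using! hK

/-- The integrand of `σ`, namely `(1 - φ(ts))/t`, with the limiting value `m s` at `t = 0`. -/
noncomputable def kr (φ : ℝ → ℝ) (m t s : ℝ) : ℝ := if t = 0 then m * s else (1 - φ (t * s)) / t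

/-- The map `σ` for an arbitrary function `φ` in place of `F̂`. With `φ s = e^{-s}` and `m = 1` it is
also the map `σ_B`, see `sigmaB_eq`. -/
noncomputable def sT (φ : ℝ → ℝ) (K : Measure ℝ) (m s : ℝ) : ℝ := ∫ t, kr φ m t s ∂K

namespace Good
variable {m C : ℝ} {φ : ℝ → ℝ} {K : Measure ℝ}

lemma kr_nonneg (h : Good m C φ) (hm : 0 ≤ m) {t s : ℝ} (ht : 0 ≤ t) (hs : 0 ≤ s) :
    0 ≤ kr φ m t s := by
  rw [kr]; split_ifs with h0
  · positivity
  · have := h.le_one (mul_nonneg ht hs)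
    exact div_nonneg (by linarith) ht

lemma kr_le (h : Good m C φ) {t s : ℝ} (ht : 0 ≤ t) (hs : 0 ≤ s) :
    kr φ m t s ≤ m * s := by
  rw [kr]; split_ifs with h0
  · rfl
  · have := h.ge _ (mul_nonneg ht hs)
    rw [div_le_iff₀ (lt_of_le_of_ne ht (Ne.symm h0))]
    linarith

lemma kr_ge (h : Good m C φ) {t s : ℝ} (ht : 0 ≤ t) (hs : 0 ≤ s) :
    m * s - C * t * s ^ 2 ≤ kr φ m t s := by
  rw [kr]; split_ifs with h0
  · simp [h0]
  · have := h.le _ (mul_nonneg ht hs)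
    rw [le_div_iff₀ (lt_of_le_of_ne ht (Ne.symm h0))]
    linarith

lemma kr_meas (h : Good m C φ) (hK : K (Iio 0) = 0) {s : ℝ} (hs : 0 ≤ s) :
    AEStronglyMeasurable (fun t => kr φ m t s) K := by
  have h1 : Continuous fun x => φ (max x 0) :=
    h.continuousOn.comp_continuous (by fun_prop) fun x => le_max_right x 0
  have h2 : Measurable fun t => kr (fun x => φ (max x 0)) m t s :=
    Measurable.ite (measurableSet_singleton 0) measurable_const
      ((measurable_const.sub (h1.measurable.comp (measurable_id.mul_const s))).div measurable_id)
  refine h2.aestronglyMeasurable.congr ((ae_nonneg hK).mono fun t ht => ?_)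
  simp [kr, max_eq_left (mul_nonneg ht hs)]

lemma kr_integrable (h : Good m C φ) (hm : 0 ≤ m) (hK : K (Iio 0) = 0) [IsProbabilityMeasure K]
    {s : ℝ} (hs : 0 ≤ s) : Integrable (fun t => kr φ m t s) K := by
  refine Integrable.of_bound (h.kr_meas hK hs) (m * s) ((ae_nonneg hK).mono fun t ht => ?_)
  rw [Real.norm_of_nonneg (h.kr_nonneg hm ht hs)]
  exact h.kr_le ht hs

lemma sT_nonneg (h : Good m C φ) (hm : 0 ≤ m) (hK : K (Iio 0) = 0)
    {s : ℝ} (hs : 0 ≤ s) : 0 ≤ sT φ K m s :=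
  integral_nonneg_of_ae ((ae_nonneg hK).mono fun _ ht => h.kr_nonneg hm ht hs)

lemma sT_le (h : Good m C φ) (hm : 0 ≤ m) (hK : K (Iio 0) = 0) [IsProbabilityMeasure K]
    {s : ℝ} (hs : 0 ≤ s) : sT φ K m s ≤ m * s := by
  have := integral_mono_ae (h.kr_integrable hm hK hs) (integrable_const (m * s))
    ((ae_nonneg hK).mono fun t ht => h.kr_le ht hs)
  simpa [sT] using this

lemma sT_ge (h : Good m C φ) (hm : 0 ≤ m) (hK : K (Iio 0) = 0) [IsProbabilityMeasure K]
    (hi : Integrable (fun t => t) K) {s : ℝ} (hs : 0 ≤ s) :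
    m * s - C * (∫ t, t ∂K) * s ^ 2 ≤ sT φ K m s := by
  have := integral_mono_ae ((integrable_const (m * s)).sub (hi.const_mul (C * s ^ 2)))
    (h.kr_integrable hm hK hs)
    ((ae_nonneg hK).mono fun t ht => by
      have := h.kr_ge ht hs
      simp only [Pi.sub_apply]; linarith)
  have e : ∫ t, (m * s - C * s ^ 2 * t) ∂K = m * s - C * (∫ t, t ∂K) * s ^ 2 := by
    rw [integral_sub (integrable_const _) (hi.const_mul _), integral_const_mul (C * s ^ 2)]; simp; ring
  rw [← e]; exact this

/-- The integrand is right-continuous in `t`, in particular at `t = 0`. -/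
lemma kr_tendsto (h : Good m C φ) {t s : ℝ} (ht : 0 ≤ t) (hs : 0 ≤ s) :
    Tendsto (fun n : ℕ => kr φ m (t + 1 / ((n : ℝ) + 1)) s) atTop (𝓝 (kr φ m t s)) := by
  have hu := (tendsto_one_div_add_atTop_nhds_zero_nat (𝕜 := ℝ)).const_add t
  rw [add_zero] at hu
  have hpos : ∀ n : ℕ, 0 < t + 1 / ((n : ℝ) + 1) := fun n => by positivity
  rcases eq_or_lt_of_le ht with h0 | h0
  · subst h0
    have h1 : Tendsto (fun n : ℕ => m * s - C * (0 + 1 / ((n : ℝ) + 1)) * s ^ 2) atTop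
        (𝓝 (m * s - C * 0 * s ^ 2)) := ((hu.const_mul C).mul_const _).const_sub _
    have h2 : kr φ m 0 s = m * s := by simp [kr]
    rw [h2]
    refine tendsto_of_tendsto_of_tendsto_of_le_of_le (by simpa using h1) tendsto_const_nhds
      (fun n => h.kr_ge (hpos n).le hs) (fun n => h.kr_le (hpos n).le hs)
  · have h1 : Tendsto (fun n : ℕ => φ ((t + 1 / ((n : ℝ) + 1)) * s)) atTop (𝓝 (φ (t * s))) := by
      have := h.continuousOn (t * s) (mul_nonneg ht hs)
      refine this.tendsto.comp (tendsto_nhdsWithin_iff.2 ⟨hu.mul_const s,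
        Eventually.of_forall fun n => mul_nonneg (hpos n).le hs⟩)
    have h2 := (h1.const_sub 1).div hu h0.ne'
    refine (h2.congr fun n => ?_).trans_eq ?_
    · rw [kr, if_neg (hpos n).ne']; rfl
    · rw [kr, if_neg h0.ne']

/-- `σ ∘ g` is a Bernstein function. Shifting `t` by `1/(n+1)` keeps `1/t` bounded, so that the
integral splits as a constant minus a mixture of functions in `CM`; then `n → ∞`. -/
lemma sT_bf (h : Good m C φ) (hm : 0 ≤ m) (hK : K (Iio 0) = 0) [IsProbabilityMeasure K]
    {g : ℝ → ℝ} (hg : BF g) (hg0 : ∀ s, 0 ≤ s → 0 ≤ g s) : BF (fun s => sT φ K m (g s)) := by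
  have hpos : ∀ (n : ℕ) (t : ℝ), 0 ≤ t → 0 < t + 1 / ((n : ℝ) + 1) := fun n t ht => by positivity
  have hle : ∀ (n : ℕ) (t : ℝ), 0 ≤ t → (t + 1 / ((n : ℝ) + 1))⁻¹ ≤ n + 1 := fun n t ht => by
    rw [inv_le_comm₀ (hpos n t ht) (by positivity)]
    rw [one_div]; linarith
  have hI : ∀ n : ℕ, Integrable (fun t : ℝ => (t + 1 / ((n : ℝ) + 1))⁻¹) K := fun n => by
    refine Integrable.of_bound (Measurable.aestronglyMeasurable (by fun_prop)) (n + 1)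
      ((ae_nonneg hK).mono fun t ht => ?_)
    rw [Real.norm_of_nonneg (inv_pos.2 (hpos n t ht)).le]
    exact hle n t ht
  have hI2 : ∀ (n : ℕ) (u : ℝ), 0 ≤ u → Integrable
      (fun t : ℝ => (t + 1 / ((n : ℝ) + 1))⁻¹ * φ ((t + 1 / ((n : ℝ) + 1)) * u)) K := fun n u hu => by
    refine (hI n).mul_bdd (c := 1) (h.meas (by fun_prop) ((ae_nonneg hK).mono fun t ht =>
      mul_nonneg (hpos n t ht).le hu)) ((ae_nonneg hK).mono fun t ht => ?_)
    have h0 := mul_nonneg (hpos n t ht).le hu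
    rw [Real.norm_of_nonneg (h.cm.nonneg h0)]
    exact h.le_one h0
  refine BF.of_tendsto (f := fun n s => ∫ t, kr φ m (t + 1 / ((n : ℝ) + 1)) (g s) ∂K)
    (fun n => ?_) fun s hs => ?_
  · have h1 : CM (fun s => ∫ t, (t + 1 / ((n : ℝ) + 1))⁻¹ * φ ((t + 1 / ((n : ℝ) + 1)) * g s) ∂K) :=
      CM.integral ((ae_nonneg hK).mono fun t ht =>
        (CM.const (inv_pos.2 (hpos n t ht)).le).mul
          (h.cm.comp (hg.const_mul (hpos n t ht).le)
            fun s hs => mul_nonneg (hpos n t ht).le (hg0 s hs)))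
        fun s hs => hI2 n _ (hg0 s hs)
    intro a ha ι S c s hs hx
    have h2 := h1.bf_sub (∫ t, (t + 1 / ((n : ℝ) + 1))⁻¹ ∂K) a ha ι S c s hs hx
    refine h2.trans_eq (Finset.sum_congr rfl fun i _ => ?_)
    dsimp only
    rw [← integral_sub (hI n) (hI2 n _ (hg0 _ (hs i)))]
    congr 4
    refine integral_congr_ae ((ae_nonneg hK).mono fun t ht => ?_)
    dsimp only
    rw [kr, if_neg (hpos n t ht).ne']; ring
  · refine tendsto_integral_of_dominated_convergence (fun _ => m * g s) (fun n => ?_)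
      (integrable_const _) (fun n => (ae_nonneg hK).mono fun t ht => ?_)
      ((ae_nonneg hK).mono fun t ht => h.kr_tendsto ht (hg0 s hs))
    · refine ((hI n).sub (hI2 n (g s) (hg0 s hs))).aestronglyMeasurable.congr
        ((ae_nonneg hK).mono fun t ht => ?_)
      simp only [Pi.sub_apply]
      rw [kr, if_neg (hpos n t ht).ne']; ring
    · rw [Real.norm_of_nonneg (h.kr_nonneg hm (hpos n t ht).le (hg0 s hs))]
      exact h.kr_le (hpos n t ht).le (hg0 s hs)

end Good

/-! ### First- and second-order bounds -/

lemma exp_neg_le {x : ℝ} (hx : 0 ≤ x) : Real.exp (-x) ≤ 1 - x + x ^ 2 / 2 := by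
  rw [Real.exp_neg]
  have h := Real.quadratic_le_exp_of_nonneg hx
  have h0 : 0 < 1 + x + x ^ 2 / 2 := by positivity
  refine (inv_anti₀ h0 h).trans ?_
  rw [inv_le_iff_one_le_mul₀ h0]
  nlinarith [sq_nonneg (x ^ 2)]

lemma good_exp : Good 1 (1 / 2) (fun u => Real.exp (-u)) where
  cm := by simpa using CM.exp_neg zero_le_one
  ge s _ := by have := Real.one_sub_le_exp_neg s; linarith
  le s hs := by have := exp_neg_le hs; linarith

lemma exp_integrable {K : Measure ℝ} [IsFiniteMeasure K] (hK : K (Iio 0) = 0) {s : ℝ}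
    (hs : 0 ≤ s) : Integrable (fun x => Real.exp (-(s * x))) K := by
  refine Integrable.of_bound (by fun_prop) 1 ((ae_nonneg hK).mono fun x hx => ?_)
  rw [Real.norm_of_nonneg (Real.exp_pos _).le]
  simpa using mul_nonneg hs hx

lemma LS_cm {K : Measure ℝ} [IsFiniteMeasure K] (hK : K (Iio 0) = 0) : CM (LS K) :=
  CM.integral ((ae_nonneg hK).mono fun _ hx => CM.exp_neg hx) fun _ hs => exp_integrable hK hs

lemma integrable_of_sq {K : Measure ℝ} [IsFiniteMeasure K]
    (h2 : Integrable (fun x => x ^ 2) K) : Integrable (fun x => x) K := by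
  have : MemLp (fun x : ℝ => x) 2 K := (memLp_two_iff_integrable_sq (by fun_prop)).2 h2
  exact this.integrable (by norm_num)

lemma LS_ge {K : Measure ℝ} [IsProbabilityMeasure K] (hK : K (Iio 0) = 0)
    (h1 : Integrable (fun x => x) K) {s : ℝ} (hs : 0 ≤ s) : 1 - (∫ x, x ∂K) * s ≤ LS K s := by
  have := integral_mono ((integrable_const (1 : ℝ)).sub (h1.const_mul s)) (exp_integrable hK hs)
    (fun x => by
      have := Real.one_sub_le_exp_neg (s * x)
      simpa using this)
  have e : ∫ x, (1 - s * x) ∂K = 1 - (∫ x, x ∂K) * s := by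
    rw [integral_sub (integrable_const _) (h1.const_mul s), integral_const_mul s]; simp; ring
  rw [← e]; exact this

lemma LS_le {K : Measure ℝ} [IsProbabilityMeasure K] (hK : K (Iio 0) = 0)
    (h2 : Integrable (fun x => x ^ 2) K) {s : ℝ} (hs : 0 ≤ s) :
    LS K s ≤ 1 - (∫ x, x ∂K) * s + (∫ x, x ^ 2 ∂K) / 2 * s ^ 2 := by
  have h1 := integrable_of_sq h2
  have hi := ((integrable_const (1 : ℝ)).sub (h1.const_mul s)).add (h2.const_mul (s ^ 2 / 2))
  have := integral_mono_ae (exp_integrable hK hs) hi ((ae_nonneg hK).mono fun x hx => by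
      have := exp_neg_le (mul_nonneg hs hx)
      simp only [Pi.add_apply, Pi.sub_apply]; linarith)
  refine this.trans_eq ?_
  change ∫ x, ((1 - s * x) + s ^ 2 / 2 * x ^ 2) ∂K = _
  have i1 : Integrable (fun x => 1 - s * x) K := (integrable_const (1 : ℝ)).sub (h1.const_mul s)
  rw [integral_add i1 (h2.const_mul (s ^ 2 / 2)),
    integral_sub (integrable_const _) (h1.const_mul s), integral_const_mul s,
    integral_const_mul (s ^ 2 / 2)]
  simp; ring

lemma good_LS {K : Measure ℝ} [IsProbabilityMeasure K] (hK : K (Iio 0) = 0)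
    (h2 : Integrable (fun x => x ^ 2) K) :
    Good (∫ x, x ∂K) ((∫ x, x ^ 2 ∂K) / 2) (LS K) where
  cm := LS_cm hK
  ge _ hs := LS_ge hK (integrable_of_sq h2) hs
  le _ hs := LS_le hK h2 hs

/-- By Fubini, `σ_B(x) = ∫ (1 - e^{-bx})/b dF_B(b)`, which has the same form as `σ`. -/
lemma sigmaB_eq {K : Measure ℝ} [IsProbabilityMeasure K] (hK : K (Iio 0) = 0) {x : ℝ}
    (hx : 0 ≤ x) : sigmaB K x = sT (fun u => Real.exp (-u)) K 1 x := by
  unfold sigmaB LS sT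
  rw [intervalIntegral_integral_swap]
  · congr 1 with b
    rw [kr]
    split_ifs with hb
    · simp [hb]
    · have : ∀ t ∈ uIcc 0 x, HasDerivAt (fun t => -(Real.exp (-(t * b)) / b))
          (Real.exp (-(t * b))) t := by
        intro t _
        have h1 : HasDerivAt (fun t => -(t * b)) (-(1 * b)) t :=
          ((hasDerivAt_id t).mul_const b).neg
        have h2 := (h1.exp.div_const b).neg
        exact h2.congr_deriv (by field_simp)
      rw [intervalIntegral.integral_eq_sub_of_hasDerivAt this
        (Continuous.intervalIntegrable (by fun_prop) _ _)]
      simp only [zero_mul, neg_zero, Real.exp_zero]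
      rw [mul_comm b x]; ring
  · have : IsFiniteMeasure (volume.restrict (uIoc 0 x)) := by
      rw [uIoc_of_le hx]; infer_instance
    refine Integrable.of_bound (by
      apply Continuous.aestronglyMeasurable
      unfold Function.uncurry; fun_prop) 1 ?_
    have h1 : ∀ᵐ p ∂((volume.restrict (uIoc 0 x)).prod K), 0 ≤ p.1 :=
      Measure.quasiMeasurePreserving_fst.ae
        ((ae_restrict_mem measurableSet_uIoc).mono fun t ht => by
          rw [uIoc_of_le hx] at ht; exact ht.1.le)
    have h2 : ∀ᵐ p ∂((volume.restrict (uIoc 0 x)).prod K), 0 ≤ p.2 :=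
      Measure.quasiMeasurePreserving_snd.ae (ae_nonneg hK)
    filter_upwards [h1, h2] with p hp1 hp2
    rw [Function.uncurry, Real.norm_of_nonneg (Real.exp_pos _).le]
    simpa using mul_nonneg hp1 hp2

/-! ### Expansions along a null sequence -/

/-- `s` is a null sequence of positive reals, and `0 ≤ v ≤ d s` with `v / s → d`. Both `s` itself and
its images under `σ` and `σ_B ∘ σ` have this form. The upper bound makes the remainders below
dominated by their limits, so that no moment needs to be finite. -/
structure App (s v : ℕ → ℝ) (d : ℝ) : Prop where
  pos : ∀ n, 0 < s n
  s0 : Tendsto s atTop (𝓝 0)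
  nn : ∀ n, 0 ≤ v n
  le : ∀ n, v n ≤ d * s n
  lim : Tendsto (fun n => v n / s n) atTop (𝓝 d)

namespace App
variable {s v : ℕ → ℝ} {d : ℝ}

lemma const_mul (h : App s v d) {t : ℝ} (ht : 0 ≤ t) : App s (fun n => t * v n) (t * d) where
  pos := h.pos
  s0 := h.s0
  nn n := mul_nonneg ht (h.nn n)
  le n := by rw [mul_assoc]; exact mul_le_mul_of_nonneg_left (h.le n) ht
  lim := by simpa only [mul_div_assoc] using h.lim.const_mul t

lemma d_nonneg (h : App s v d) : 0 ≤ d :=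
  ge_of_tendsto' h.lim fun n => div_nonneg (h.nn n) (h.pos n).le

lemma v0 (h : App s v d) : Tendsto v atTop (𝓝 0) := by
  have := h.lim.mul h.s0
  rw [mul_zero] at this
  exact this.congr fun n => div_mul_cancel₀ _ (h.pos n).ne'

end App

/-- Second-order expansion `φ(v) = 1 - m v + M v²/2 + o(s²)` along all sequences `v ~ d s`. -/
def Lim2 (m M : ℝ) (φ : ℝ → ℝ) : Prop := ∀ s v d, App s v d →
  Tendsto (fun n => (φ (v n) - 1 + m * v n) / s n ^ 2) atTop (𝓝 (M * d ^ 2 / 2))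

lemma Lim2.lim1 {m M : ℝ} {φ : ℝ → ℝ} (h : Lim2 m M φ) {s v d} (ha : App s v d) :
    Tendsto (fun n => (1 - φ (v n)) / s n) atTop (𝓝 (m * d)) := by
  have := (ha.lim.const_mul m).sub ((h s v d ha).mul ha.s0)
  rw [mul_zero, sub_zero] at this
  refine this.congr fun n => ?_
  have := (ha.pos n).ne'
  field_simp; ring

lemma lim2_exp : Lim2 1 1 (fun u => Real.exp (-u)) := by
  intro s v d h
  have hv2 : Tendsto (fun n => v n ^ 2 / s n ^ 2 / 2) atTop (𝓝 (d ^ 2 / 2)) := by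
    simpa only [div_pow] using (h.lim.pow 2).div_const 2
  have hv3 : Tendsto (fun n => v n ^ 2 / s n ^ 2 / 2 - v n ^ 2 / s n ^ 2 / 2 * v n) atTop
      (𝓝 (d ^ 2 / 2 - d ^ 2 / 2 * 0)) := hv2.sub (hv2.mul h.v0)
  rw [mul_zero, sub_zero] at hv3
  rw [one_mul]
  refine tendsto_of_tendsto_of_tendsto_of_le_of_le' hv3 hv2 ?_ ?_
  · have : ∀ᶠ n in atTop, v n ≤ 1 := h.v0.eventually_le_const one_pos
    filter_upwards [this] with n hn
    have hb := Real.exp_bound (x := -v n) (by rw [abs_neg, abs_of_nonneg (h.nn n)]; exact hn)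
      (n := 3) (by norm_num)
    simp [Finset.sum_range_succ, Nat.factorial, abs_of_nonneg (h.nn n)] at hb
    have hb := (abs_le.1 hb).1
    have h3 : 0 ≤ v n ^ 3 := pow_nonneg (h.nn n) 3
    have : v n ^ 2 / s n ^ 2 / 2 - v n ^ 2 / s n ^ 2 / 2 * v n
      = (v n ^ 2 / 2 - v n ^ 3 / 2) / s n ^ 2 := by ring
    rw [this]
    gcongr
    linarith
  · refine Eventually.of_forall fun n => ?_
    have hb := exp_neg_le (h.nn n)
    have : v n ^ 2 / s n ^ 2 / 2 = (v n ^ 2 / 2) / s n ^ 2 := by ring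
    rw [this]
    gcongr
    linarith

lemma App.e2_le {s v : ℕ → ℝ} {d : ℝ} (h : App s v d) (n : ℕ) :
    (Real.exp (-v n) - 1 + v n) / s n ^ 2 ≤ d ^ 2 / 2 := by
  have hp := h.pos n
  rw [div_le_iff₀ (by positivity)]
  have := exp_neg_le (h.nn n)
  have h2 := pow_le_pow_left₀ (h.nn n) (h.le n) 2
  nlinarith

lemma e2_nonneg (s v : ℝ) : 0 ≤ (Real.exp (-v) - 1 + v) / s ^ 2 := by
  have := Real.one_sub_le_exp_neg v
  apply div_nonneg <;> [linarith; positivity]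

lemma lim2_LS {K : Measure ℝ} [IsProbabilityMeasure K] (hK : K (Iio 0) = 0)
    (h2 : Integrable (fun x => x ^ 2) K) :
    Lim2 (∫ x, x ∂K) (∫ x, x ^ 2 ∂K) (LS K) := by
  intro s v d h
  have h1 := integrable_of_sq h2
  have key : Tendsto (fun n => ∫ x, (Real.exp (-(x * v n)) - 1 + x * v n) / s n ^ 2 ∂K) atTop
      (𝓝 (∫ x, x ^ 2 * (d ^ 2 / 2) ∂K)) := by
    refine tendsto_integral_of_dominated_convergence (fun x => x ^ 2 * (d ^ 2 / 2))
      (fun n => Measurable.aestronglyMeasurable (by fun_prop)) (h2.mul_const _)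
      (fun n => (ae_nonneg hK).mono fun x hx => ?_) ((ae_nonneg hK).mono fun x hx => ?_)
    · rw [Real.norm_of_nonneg (e2_nonneg _ _)]
      have := (h.const_mul hx).e2_le n
      linarith
    · have := lim2_exp _ _ _ (h.const_mul hx)
      simp only [one_mul] at this
      convert this using 2
      ring
  rw [integral_mul_const] at key
  rw [mul_div_assoc]
  refine key.congr fun n => ?_
  have e1 : Integrable (fun x => Real.exp (-(x * v n))) K := by
    simpa only [mul_comm] using exp_integrable hK (h.nn n)
  have i1 : Integrable (fun x => Real.exp (-(x * v n)) - 1) K := e1.sub (integrable_const 1)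
  rw [integral_div, integral_add i1 (h1.mul_const _), integral_sub e1 (integrable_const 1),
      integral_mul_const, LS]
  simp [mul_comm]

/-- If `f n ≤ g` and `f n → g` then `∫⁻ f n → ∫⁻ g`, even when `∫⁻ g = ∞`: Fatou gives the lower bound. -/
lemma lintegral_sandwich {K : Measure ℝ} {f : ℕ → ℝ → ℝ≥0∞} {g : ℝ → ℝ≥0∞}
    (hm : ∀ n, AEMeasurable (f n) K) (hle : ∀ n, ∀ᵐ x ∂K, f n x ≤ g x)
    (hl : ∀ᵐ x ∂K, Tendsto (fun n => f n x) atTop (𝓝 (g x))) :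
    Tendsto (fun n => ∫⁻ x, f n x ∂K) atTop (𝓝 (∫⁻ x, g x ∂K)) := by
  refine tendsto_of_le_liminf_of_limsup_le ?_ ?_
  · rw [← lintegral_congr_ae (hl.mono fun x hx => hx.liminf_eq)]
    exact lintegral_liminf_le' hm
  · exact limsup_le_of_le (h := Eventually.of_forall fun n => lintegral_mono_ae (hle n))

lemma sT_app {m C : ℝ} {φ : ℝ → ℝ} (h : Good m C φ) (hm : 0 ≤ m) {K : Measure ℝ}
    [IsProbabilityMeasure K] (hK : K (Iio 0) = 0) {s v d} (ha : App s v d) :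
    App s (fun n => sT φ K m (v n)) (m * d) where
  pos := ha.pos
  s0 := ha.s0
  nn n := h.sT_nonneg hm hK (ha.nn n)
  le n := (h.sT_le hm hK (ha.nn n)).trans (by
    rw [mul_assoc]; exact mul_le_mul_of_nonneg_left (ha.le n) hm)
  lim := by
    have key : Tendsto (fun n => ∫ t, kr φ m t (v n) / s n ∂K) atTop (𝓝 (∫ _, m * d ∂K)) := by
      refine tendsto_integral_of_dominated_convergence (fun _ => m * d)
        (fun n => ((h.kr_meas hK (ha.nn n)).aemeasurable.div_const _).aestronglyMeasurable)
        (integrable_const _)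
        (fun n => (ae_nonneg hK).mono fun t ht => ?_) ((ae_nonneg hK).mono fun t ht => ?_)
      · rw [Real.norm_of_nonneg (div_nonneg (h.kr_nonneg hm ht (ha.nn n)) (ha.pos n).le),
          div_le_iff₀ (ha.pos n), mul_assoc]
        exact (h.kr_le ht (ha.nn n)).trans (mul_le_mul_of_nonneg_left (ha.le n) hm)
      · have h1 := ha.lim.const_mul m
        have h2 := h1.sub ((ha.lim.mul ha.v0).const_mul (C * t))
        rw [mul_zero, mul_zero, sub_zero] at h2
        refine tendsto_of_tendsto_of_tendsto_of_le_of_le h2 h1 (fun n => ?_) (fun n => ?_)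
        · have := h.kr_ge ht (ha.nn n)
          dsimp only
          rw [le_div_iff₀ (ha.pos n)]
          have hp := (ha.pos n).ne'
          field_simp
          linarith
        · dsimp only
          rw [← mul_div_assoc]
          exact div_le_div_of_nonneg_right (h.kr_le ht (ha.nn n)) (ha.pos n).le
    simpa only [sT, integral_div, integral_const, probReal_univ, one_smul] using key

/-- The second-order term of `σ` is `M d²/2` times the mean of the mixing law, as an identity in
`[0,∞]`: if that mean is infinite, so is the limit. -/
lemma sT_second {m M : ℝ} {φ : ℝ → ℝ} (h : Good m (M / 2) φ) (h2 : Lim2 m M φ) (hm : 0 ≤ m)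
    (hM : 0 ≤ M)
    {K : Measure ℝ} [IsProbabilityMeasure K] (hK : K (Iio 0) = 0) {s v d} (ha : App s v d) :
    Tendsto (fun n => ENNReal.ofReal ((m * v n - sT φ K m (v n)) / s n ^ 2)) atTop
      (𝓝 (ENNReal.ofReal (M * d ^ 2 / 2) * ∫⁻ t, ENNReal.ofReal t ∂K)) := by
  have hMd : 0 ≤ M * d ^ 2 / 2 := by positivity
  rw [← lintegral_const_mul _ (by fun_prop)]
  simp only [← ENNReal.ofReal_mul hMd]
  have e : ∀ n, ENNReal.ofReal ((m * v n - sT φ K m (v n)) / s n ^ 2)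
      = ∫⁻ t, ENNReal.ofReal ((m * v n - kr φ m t (v n)) / s n ^ 2) ∂K := by
    intro n
    have hi := h.kr_integrable hm hK (ha.nn n)
    rw [← ofReal_integral_eq_lintegral_ofReal]
    · rw [integral_div, integral_sub (integrable_const _) hi]; simp [sT]
    · exact ((integrable_const _).sub hi).div_const _
    · filter_upwards [ae_nonneg hK] with t ht
      exact div_nonneg (sub_nonneg.2 (h.kr_le ht (ha.nn n))) (by positivity)
  simp only [e]
  refine lintegral_sandwich (fun n => ?_) (fun n => (ae_nonneg hK).mono fun t ht => ?_)
    ((ae_nonneg hK).mono fun t ht => ?_)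
  · exact (((h.kr_meas hK (ha.nn n)).aemeasurable.const_sub _).div_const _).ennreal_ofReal
  · refine ENNReal.ofReal_le_ofReal ?_
    have hp := ha.pos n
    rw [div_le_iff₀ (by positivity)]
    have h1 := h.kr_ge ht (ha.nn n)
    have h3 := pow_le_pow_left₀ (ha.nn n) (ha.le n) 2
    have h4 := mul_le_mul_of_nonneg_left h3 (mul_nonneg (by linarith : 0 ≤ M / 2) ht)
    nlinarith
  · refine (ENNReal.continuous_ofReal.tendsto _).comp ?_
    rcases eq_or_lt_of_le ht with h0 | h0
    · subst h0; simp [kr]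
    · have := (h2 _ _ _ (ha.const_mul ht)).div_const t
      have e2 : M * (t * d) ^ 2 / 2 / t = M * d ^ 2 / 2 * t := by field_simp
      rw [e2] at this
      refine this.congr fun n => ?_
      rw [kr, if_neg h0.ne']
      have := (ha.pos n).ne'
      field_simp; ring

/-- First-order term of a Laplace transform, without assuming that the mean is finite. -/
lemma A_first {K : Measure ℝ} [IsProbabilityMeasure K] (hK : K (Iio 0) = 0) {s v d}
    (ha : App s v d) :
    Tendsto (fun n => ENNReal.ofReal ((1 - LS K (v n)) / s n)) atTop
      (𝓝 (ENNReal.ofReal d * ∫⁻ t, ENNReal.ofReal t ∂K)) := by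
  rw [← lintegral_const_mul _ (by fun_prop)]
  simp only [← ENNReal.ofReal_mul ha.d_nonneg]
  have e : ∀ n, ENNReal.ofReal ((1 - LS K (v n)) / s n)
      = ∫⁻ t, ENNReal.ofReal ((1 - Real.exp (-(v n * t))) / s n) ∂K := by
    intro n
    have hi := exp_integrable hK (ha.nn n)
    rw [← ofReal_integral_eq_lintegral_ofReal]
    · rw [integral_div, integral_sub (integrable_const _) hi]; simp [LS]
    · exact ((integrable_const _).sub hi).div_const _
    · filter_upwards [ae_nonneg hK] with t ht
      refine div_nonneg (sub_nonneg.2 ?_) (ha.pos n).le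
      simpa using mul_nonneg (ha.nn n) ht
  simp only [e]
  refine lintegral_sandwich (fun n => by fun_prop) (fun n => (ae_nonneg hK).mono fun t ht => ?_)
    ((ae_nonneg hK).mono fun t ht => ?_)
  · refine ENNReal.ofReal_le_ofReal ?_
    rw [div_le_iff₀ (ha.pos n)]
    have := Real.one_sub_le_exp_neg (v n * t)
    have := mul_le_mul_of_nonneg_right (ha.le n) ht
    linarith
  · refine (ENNReal.continuous_ofReal.tendsto _).comp ?_
    have := lim2_exp.lim1 (ha.const_mul ht)
    simpa only [one_mul, mul_one, mul_comm] using this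

/-- Second-order term of a Laplace transform, without assuming a finite second moment. -/
lemma A_second {K : Measure ℝ} [IsProbabilityMeasure K] (hK : K (Iio 0) = 0)
    (h1 : Integrable (fun x => x) K) {s v d} (ha : App s v d) :
    Tendsto (fun n => ENNReal.ofReal ((LS K (v n) - 1 + (∫ x, x ∂K) * v n) / s n ^ 2)) atTop
      (𝓝 (ENNReal.ofReal (d ^ 2 / 2) * ∫⁻ t, ENNReal.ofReal (t ^ 2) ∂K)) := by
  rw [← lintegral_const_mul _ (by fun_prop)]
  simp only [← ENNReal.ofReal_mul (by positivity : 0 ≤ d ^ 2 / 2)]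
  have e : ∀ n, ENNReal.ofReal ((LS K (v n) - 1 + (∫ x, x ∂K) * v n) / s n ^ 2)
      = ∫⁻ t, ENNReal.ofReal ((Real.exp (-(t * v n)) - 1 + t * v n) / s n ^ 2) ∂K := by
    intro n
    have hi : Integrable (fun x => Real.exp (-(x * v n))) K := by
      simpa only [mul_comm] using exp_integrable hK (ha.nn n)
    have i1 : Integrable (fun x => Real.exp (-(x * v n)) - 1) K := hi.sub (integrable_const 1)
    rw [← ofReal_integral_eq_lintegral_ofReal]
    · rw [integral_div, integral_add i1 (h1.mul_const _), integral_sub hi (integrable_const 1),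
      integral_mul_const, LS]
      simp [mul_comm]
    · exact (i1.add (h1.mul_const _)).div_const _
    · filter_upwards [ae_nonneg hK] with t ht
      exact e2_nonneg _ _
  simp only [e]
  refine lintegral_sandwich (fun n => by fun_prop) (fun n => (ae_nonneg hK).mono fun t ht => ?_)
    ((ae_nonneg hK).mono fun t ht => ?_)
  · refine ENNReal.ofReal_le_ofReal ?_
    have := (ha.const_mul ht).e2_le n
    linarith
  · refine (ENNReal.continuous_ofReal.tendsto _).comp ?_
    have := lim2_exp _ _ _ (ha.const_mul ht)
    simp only [one_mul] at this
    convert this using 2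
    ring

/-! ### Moment identities satisfied by a solution -/

lemma fin_integrable {K : Measure ℝ} {f : ℝ → ℝ} (hf : Measurable f) (h0 : ∀ᵐ x ∂K, 0 ≤ f x) :
    ∫⁻ x, ENNReal.ofReal (f x) ∂K < ⊤ ↔ Integrable f K :=
  lt_top_iff_ne_top.trans (lintegral_ofReal_ne_top_iff_integrable hf.aestronglyMeasurable h0)

lemma sq_mean_le {K : Measure ℝ} [IsProbabilityMeasure K] (h2 : Integrable (fun x => x ^ 2) K) :
    (∫ x, x ∂K) ^ 2 ≤ ∫ x, x ^ 2 ∂K := by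
  have h1 := integrable_of_sq h2
  set m := ∫ x, x ∂K with hm
  have h : 0 ≤ ∫ x, ((x ^ 2 - 2 * m * x) + m ^ 2) ∂K :=
    integral_nonneg fun x => by
      have := sq_nonneg (x - m)
      simp only [Pi.zero_apply]; linarith
  have i1 : Integrable (fun x => x ^ 2 - 2 * m * x) K := h2.sub (h1.const_mul _)
  rw [integral_add i1 (integrable_const _), integral_sub h2 (h1.const_mul _),
    integral_const_mul, ← hm] at h
  simp at h
  linarith

/-- The right-hand side of the functional equation, as an operator on the function `φ` that replaces
the transform of the unknown; `rhs_eq` is the identification. -/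
noncomputable def Op (FT FA FB : Measure ℝ) (μ : ℝ) (φ : ℝ → ℝ) (s : ℝ) : ℝ :=
  LS FA (sT (fun u => Real.exp (-u)) FB 1 (sT φ FT μ s))

lemma app_id : App (fun n : ℕ => 1 / ((n : ℝ) + 1)) (fun n : ℕ => 1 / ((n : ℝ) + 1)) 1 where
  pos n := by positivity
  s0 := tendsto_one_div_add_atTop_nhds_zero_nat
  nn n := by positivity
  le n := by rw [one_mul]
  lim := tendsto_const_nhds.congr fun n => by
    rw [div_self]; positivity

lemma rhs_eq {FT FA FB : Measure ℝ} [IsProbabilityMeasure FT] [IsProbabilityMeasure FB]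
    (hT : FT (Iio 0) = 0) (hB : FB (Iio 0) = 0) {μ C : ℝ} (hμ : 0 ≤ μ) {F : Measure ℝ}
    (hF : Good μ C (LS F)) {s : ℝ} (hs : 0 ≤ s) :
    ∫ a, Real.exp (-(a * sigmaB FB (sigmaT F FT μ s))) ∂FA = Op FT FA FB μ (LS F) s := by
  have e : sigmaT F FT μ s = sT (LS F) FT μ s := rfl
  rw [e, sigmaB_eq hB (hF.sT_nonneg hμ hT hs), Op]
  simp only [LS, mul_comm]

/-- A solution forces the moment conditions. The first-order terms of the equation give `E[A] = 1`;
the second-order terms give, in `[0,∞]`,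
`E[F²]/2 = μ²/2 E[A²] + μ²/2 E[B] + E[F²]/2 E[T]`, which forces all three moments to be finite, and
`E[T] < 1` because `E[A²] ≥ 1`. The same identity gives the second moment of the solution. -/
lemma second_order {FT FA FB : Measure ℝ} [IsProbabilityMeasure FT] [IsProbabilityMeasure FA]
    [IsProbabilityMeasure FB]
    (hT : FT (Iio 0) = 0) (hA : FA (Iio 0) = 0) (hB : FB (Iio 0) = 0) {μ : ℝ} (hμ : 0 < μ)
    {F : Measure ℝ} (hF : Sol FT FA FB μ F) :
    Cond FT FA FB ∧
      (∫ x, x ^ 2 ∂F) * (1 - ∫ t, t ∂FT) = μ ^ 2 * ((∫ a, a ^ 2 ∂FA) + ∫ b, b ∂FB) := by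
  obtain ⟨hP, hF0, hm, h2, heq⟩ := hF
  have hG := good_LS hF0 h2
  have hL := lim2_LS hF0 h2
  have hmean := sq_mean_le h2
  rw [hm] at hG hL hmean
  set m2 := ∫ x, x ^ 2 ∂F
  have hm2 : 0 < m2 := lt_of_lt_of_le (by positivity) hmean
  set s : ℕ → ℝ := fun n => 1 / ((n : ℝ) + 1)
  have hs : App s s 1 := app_id
  have hσ := sT_app hG hμ.le hT hs
  have hg := sT_app good_exp zero_le_one hB hσ
  rw [one_mul, mul_one] at hg
  rw [mul_one] at hσ
  set σ : ℕ → ℝ := fun n => sT (LS F) FT μ (s n)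
  set g : ℕ → ℝ := fun n => sT (fun u => Real.exp (-u)) FB 1 (σ n)
  have hfix : ∀ n, LS F (s n) = LS FA (g n) := fun n => by
    rw [heq _ (hs.nn n), rhs_eq hT hB hμ.le hG (hs.nn n)]; rfl
  have hA1 : ∫⁻ a, ENNReal.ofReal a ∂FA = 1 := by
    have l1 := A_first hA hg
    have l2 := (ENNReal.continuous_ofReal.tendsto _).comp (hL.lim1 hs)
    have l3 := tendsto_nhds_unique l1 (l2.congr fun n => by simp only [Function.comp, hfix])
    rw [mul_one] at l3
    have hp : ENNReal.ofReal μ ≠ 0 := by simpa using hμ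
    exact (ENNReal.mul_eq_left hp ENNReal.ofReal_ne_top).1 l3
  have iA : Integrable (fun a => a) FA :=
    (fin_integrable measurable_id (ae_nonneg hA)).1 (by simp [hA1])
  have eA : ∫ a, a ∂FA = 1 := by
    rw [integral_eq_lintegral_of_nonneg_ae (ae_nonneg hA) iA.1, hA1]; simp
  have key : ENNReal.ofReal (m2 * 1 ^ 2 / 2) =
      ENNReal.ofReal (μ ^ 2 / 2) * (∫⁻ a, ENNReal.ofReal (a ^ 2) ∂FA) +
      ENNReal.ofReal (1 * μ ^ 2 / 2) * (∫⁻ b, ENNReal.ofReal b ∂FB) +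
      ENNReal.ofReal (m2 * 1 ^ 2 / 2) * (∫⁻ t, ENNReal.ofReal t ∂FT) := by
    have l1 := A_second hA iA hg
    have l2 := sT_second good_exp lim2_exp zero_le_one zero_le_one hB hσ
    have l3 := sT_second hG hL hμ.le hm2.le hT hs
    -- With `g = σ_B(σ(s))`, `σ = σ(s)` and `Â` the transform of `F_A`:
    -- `φ(s) - 1 + μ s = (Â(g) - 1 + g) + (σ - g) + (μ s - σ)`, all three terms being nonnegative.
    refine tendsto_nhds_unique ((ENNReal.continuous_ofReal.tendsto _).comp (hL s s 1 hs))
      (((l1.add l2).add l3).congr fun n => ?_)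
    have n1 : 0 ≤ (LS FA (g n) - 1 + (∫ x, x ∂FA) * g n) / s n ^ 2 := by
      have := LS_ge hA iA (hg.nn n)
      exact div_nonneg (by linarith) (by positivity)
    have n2 : 0 ≤ (1 * σ n - g n) / s n ^ 2 := by
      have := good_exp.sT_le zero_le_one hB (hσ.nn n)
      exact div_nonneg (by linarith) (by positivity)
    have n3 : 0 ≤ (μ * s n - σ n) / s n ^ 2 := by
      have := hG.sT_le hμ.le hT (hs.nn n)
      exact div_nonneg (by linarith) (by positivity)
    rw [← ENNReal.ofReal_add n1 n2, ← ENNReal.ofReal_add (add_nonneg n1 n2) n3,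
      Function.comp, hfix, eA]
    congr 1
    ring
  have hμ2 : ENNReal.ofReal (μ ^ 2 / 2) ≠ 0 := by simpa using by positivity
  have hμ3 : ENNReal.ofReal (1 * μ ^ 2 / 2) ≠ 0 := by simpa using by positivity
  have hm3 : ENNReal.ofReal (m2 * 1 ^ 2 / 2) ≠ 0 := by simpa using by positivity
  have hfin : _ ≠ ⊤ := key ▸ (ENNReal.ofReal_ne_top (r := m2 * 1 ^ 2 / 2))
  obtain ⟨hfin', f3⟩ := ENNReal.add_ne_top.1 hfin
  obtain ⟨f1, f2⟩ := ENNReal.add_ne_top.1 hfin'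
  have f1 := ENNReal.lt_top_of_mul_ne_top_right f1 hμ2
  have f2 := ENNReal.lt_top_of_mul_ne_top_right f2 hμ3
  have f3 := ENNReal.lt_top_of_mul_ne_top_right f3 hm3
  have iA2 := (fin_integrable (by fun_prop) (Eventually.of_forall fun x => sq_nonneg x)).1 f1
  have iB := (fin_integrable measurable_id (ae_nonneg hB)).1 f2
  have iT := (fin_integrable measurable_id (ae_nonneg hT)).1 f3
  have pB : 0 ≤ ∫ b, b ∂FB := integral_nonneg_of_ae (ae_nonneg hB)
  have pT : 0 ≤ ∫ t, t ∂FT := integral_nonneg_of_ae (ae_nonneg hT)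
  have eA2 := sq_mean_le iA2
  rw [eA] at eA2
  have eT : ∫⁻ t, ENNReal.ofReal t ∂FT = ENNReal.ofReal (∫ t, t ∂FT) :=
    (ofReal_integral_eq_lintegral_ofReal iT (ae_nonneg hT)).symm
  have eB : ∫⁻ b, ENNReal.ofReal b ∂FB = ENNReal.ofReal (∫ b, b ∂FB) :=
    (ofReal_integral_eq_lintegral_ofReal iB (ae_nonneg hB)).symm
  rw [← ofReal_integral_eq_lintegral_ofReal iA2 (Eventually.of_forall fun x => sq_nonneg x),
    eB, eT, ← ENNReal.ofReal_mul (by positivity), ← ENNReal.ofReal_mul (by positivity),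
    ← ENNReal.ofReal_mul (by positivity), ← ENNReal.ofReal_add (by positivity) (by positivity),
    ← ENNReal.ofReal_add (by positivity) (by positivity),
    ENNReal.ofReal_eq_ofReal_iff (by positivity) (by positivity)] at key
  have key2 : m2 * (1 - ∫ t, t ∂FT) = μ ^ 2 * ((∫ a, a ^ 2 ∂FA) + ∫ b, b ∂FB) := by linarith
  refine ⟨⟨?_, hA1, f1, f2⟩, key2⟩
  rw [eT, ENNReal.ofReal_lt_one]
  have : 0 < m2 * (1 - ∫ t, t ∂FT) := by rw [key2]; apply mul_pos <;> [positivity; linarith]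
  have := pos_of_mul_pos_right this hm2.le
  linarith

/-! ### The contraction -/

lemma Good.abs_lip {m C : ℝ} {φ : ℝ → ℝ} (h : Good m C φ) {u v : ℝ} (hu : 0 ≤ u) (hv : 0 ≤ v) :
    |φ u - φ v| ≤ m * |u - v| := by
  wlog huv : u ≤ v generalizing u v
  · rw [abs_sub_comm, abs_sub_comm u]; exact this hv hu (le_of_not_ge huv)
  have h1 := h.lip hu (sub_nonneg.2 huv)
  rw [add_sub_cancel] at h1
  rw [abs_of_nonneg (sub_nonneg.2 (h.cm.anti hu huv)), abs_sub_comm,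
    abs_of_nonneg (sub_nonneg.2 huv)]
  exact h1

lemma Good.sT_lip {m C : ℝ} {φ : ℝ → ℝ} (h : Good m C φ) (hm : 0 ≤ m) {K : Measure ℝ}
    [IsProbabilityMeasure K] (hK : K (Iio 0) = 0) {u v : ℝ} (hu : 0 ≤ u) (hv : 0 ≤ v) :
    |sT φ K m u - sT φ K m v| ≤ m * |u - v| := by
  rw [sT, sT, ← integral_sub (h.kr_integrable hm hK hu) (h.kr_integrable hm hK hv)]
  have := norm_integral_le_of_norm_le_const (μ := K) (f := fun t => kr φ m t u - kr φ m t v)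
    (C := m * |u - v|) ((ae_nonneg hK).mono fun t ht => ?_)
  · simpa using this
  · rw [Real.norm_eq_abs, kr, kr]
    split_ifs with h0
    · rw [← mul_sub, abs_mul, abs_of_nonneg hm]
    · have hp := lt_of_le_of_ne ht (Ne.symm h0)
      have h1 := h.abs_lip (mul_nonneg ht hv) (mul_nonneg ht hu)
      rw [← sub_div, abs_div, abs_of_pos hp, div_le_iff₀ hp]
      rw [← mul_sub, abs_mul, abs_of_pos hp, abs_sub_comm v u] at h1
      rw [sub_sub_sub_cancel_left]
      linarith

/-- In the weighted distance `sup |φ - ψ|/s²`, the map `φ ↦ σ` is Lipschitz with constant `E[T]`. -/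
lemma sT_sub_le {m C C' D : ℝ} {φ ψ : ℝ → ℝ} (h : Good m C φ) (h' : Good m C' ψ) (hm : 0 ≤ m)
    {K : Measure ℝ} [IsProbabilityMeasure K] (hK : K (Iio 0) = 0)
    (hi : Integrable (fun t => t) K)
    (hD : ∀ s, 0 ≤ s → |φ s - ψ s| ≤ D * s ^ 2) {s : ℝ} (hs : 0 ≤ s) :
    |sT φ K m s - sT ψ K m s| ≤ D * (∫ t, t ∂K) * s ^ 2 := by
  rw [sT, sT, ← integral_sub (h.kr_integrable hm hK hs) (h'.kr_integrable hm hK hs)]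
  have := norm_integral_le_of_norm_le (μ := K) (f := fun t => kr φ m t s - kr ψ m t s)
    (hi.const_mul (D * s ^ 2)) ((ae_nonneg hK).mono fun t ht => ?_)
  · rw [integral_const_mul] at this
    rw [Real.norm_eq_abs] at this
    linarith
  · rw [Real.norm_eq_abs, kr, kr]
    split_ifs with h0
    · simp [h0]
    · have hp := lt_of_le_of_ne ht (Ne.symm h0)
      have h1 := hD _ (mul_nonneg ht hs)
      rw [← sub_div, abs_div, abs_of_pos hp, div_le_iff₀ hp, sub_sub_sub_cancel_left,
        abs_sub_comm]
      linarith

/-- The moment conditions of `Cond` as integrability and real-valued moments, together with the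
support conditions. -/
structure Reg (FT FA FB : Measure ℝ) : Prop where
  hT : FT (Iio 0) = 0
  hA : FA (Iio 0) = 0
  hB : FB (Iio 0) = 0
  iT : Integrable (fun t => t) FT
  iA : Integrable (fun a => a ^ 2) FA
  iB : Integrable (fun b => b) FB
  eA : ∫ a, a ∂FA = 1
  lt : ∫ t, t ∂FT < 1

lemma Cond.reg {FT FA FB : Measure ℝ}
    (hT : FT (Iio 0) = 0) (hA : FA (Iio 0) = 0) (hB : FB (Iio 0) = 0) (h : Cond FT FA FB) :
    Reg FT FA FB := by
  obtain ⟨h1, h2, h3, h4⟩ := h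
  have iT := (fin_integrable measurable_id (ae_nonneg hT)).1 (h1.trans ENNReal.one_lt_top)
  refine ⟨hT, hA, hB, iT,
    (fin_integrable (by fun_prop) (Eventually.of_forall fun x => sq_nonneg x)).1 h3,
    (fin_integrable measurable_id (ae_nonneg hB)).1 h4, ?_, ?_⟩
  · rw [integral_eq_lintegral_of_nonneg_ae (ae_nonneg hA) measurable_id.aestronglyMeasurable, h2]
    simp
  · have eT : ∫⁻ t, ENNReal.ofReal t ∂FT = ENNReal.ofReal (∫ t, t ∂FT) :=
      (ofReal_integral_eq_lintegral_ofReal iT (ae_nonneg hT)).symm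
    rwa [eT, ENNReal.ofReal_lt_one] at h1

lemma Sol.good {FT FA FB : Measure ℝ} {μ : ℝ} {F : Measure ℝ} (h : Sol FT FA FB μ F) :
    Good μ ((∫ x, x ^ 2 ∂F) / 2) (LS F) := by
  obtain ⟨hP, hF0, hm, h2, _⟩ := h
  have := good_LS hF0 h2
  rwa [hm] at this

lemma Sol.eq_Op {FT FA FB : Measure ℝ} [IsProbabilityMeasure FT]
    [IsProbabilityMeasure FB] {μ : ℝ} (R : Reg FT FA FB) (hμ : 0 ≤ μ) {F : Measure ℝ} (h : Sol FT FA FB μ F) {s : ℝ}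
    (hs : 0 ≤ s) : LS F s = Op FT FA FB μ (LS F) s := by
  rw [← rhs_eq R.hT R.hB hμ h.good hs]; exact h.2.2.2.2 s hs

section Contraction
variable {FT FA FB : Measure ℝ} [IsProbabilityMeasure FT] [IsProbabilityMeasure FA]
    [IsProbabilityMeasure FB] {μ : ℝ}

lemma Op_sub_le (R : Reg FT FA FB) (hμ : 0 ≤ μ) {C C' D : ℝ} {φ ψ : ℝ → ℝ}
    (h : Good μ C φ) (h' : Good μ C' ψ)
    (hD : ∀ s, 0 ≤ s → |φ s - ψ s| ≤ D * s ^ 2) {s : ℝ} (hs : 0 ≤ s) :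
    |Op FT FA FB μ φ s - Op FT FA FB μ ψ s| ≤ D * (∫ t, t ∂FT) * s ^ 2 := by
  have hGA := good_LS R.hA R.iA
  rw [R.eA] at hGA
  have n1 := h.sT_nonneg hμ R.hT hs
  have n2 := h'.sT_nonneg hμ R.hT hs
  refine (hGA.abs_lip (good_exp.sT_nonneg zero_le_one R.hB n1)
    (good_exp.sT_nonneg zero_le_one R.hB n2)).trans ?_
  rw [one_mul]
  refine (good_exp.sT_lip zero_le_one R.hB n1 n2).trans ?_
  rw [one_mul]
  exact sT_sub_le h h' hμ R.hT R.iT hD hs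

lemma Good.dist_le {m C : ℝ} {φ ψ : ℝ → ℝ} (h : Good m C φ) (h' : Good m C ψ) {s : ℝ}
    (hs : 0 ≤ s) : |φ s - ψ s| ≤ C * s ^ 2 := by
  have := h.ge s hs
  have := h.le s hs
  have := h'.ge s hs
  have := h'.le s hs
  rw [abs_le]; constructor <;> linarith

lemma Good.mono {m C C' : ℝ} {φ : ℝ → ℝ} (h : Good m C φ) (hC : C ≤ C') : Good m C' φ where
  cm := h.cm
  ge := h.ge
  le s hs := (h.le s hs).trans (by gcongr)

/-- The constant `C`, half the predicted second moment, is exactly the one that the operator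
preserves. -/
lemma Op_good (R : Reg FT FA FB) (hμ : 0 ≤ μ) {C : ℝ} {φ : ℝ → ℝ} (h : Good μ C φ)
    (hC : C * (1 - ∫ t, t ∂FT) = μ ^ 2 * ((∫ a, a ^ 2 ∂FA) + ∫ b, b ∂FB) / 2) :
    Good μ C (Op FT FA FB μ φ) where
  cm := (LS_cm R.hA).comp (good_exp.sT_bf zero_le_one R.hB
      (h.sT_bf hμ R.hT BF.id fun _ hs => hs) fun _ hs => h.sT_nonneg hμ R.hT hs)
    fun _ hs => good_exp.sT_nonneg zero_le_one R.hB (h.sT_nonneg hμ R.hT hs)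
  ge s hs := by
    have n1 := h.sT_nonneg hμ R.hT hs
    have n2 := good_exp.sT_nonneg zero_le_one R.hB n1
    have h1 := LS_ge R.hA (integrable_of_sq R.iA) n2
    rw [R.eA] at h1
    have h2 := h.sT_le hμ R.hT hs
    have h3 := good_exp.sT_le zero_le_one R.hB n1
    rw [Op]; linarith
  le s hs := by
    have n1 := h.sT_nonneg hμ R.hT hs
    have n2 := good_exp.sT_nonneg zero_le_one R.hB n1
    have h1 := LS_le R.hA R.iA n2
    rw [R.eA] at h1
    have h2 := h.sT_le hμ R.hT hs
    have h3 := good_exp.sT_le zero_le_one R.hB n1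
    have h4 := h.sT_ge hμ R.hT R.iT hs
    have h5 := good_exp.sT_ge zero_le_one R.hB R.iB n1
    rw [Op]
    set σ := sT φ FT μ s
    set g := sT (fun u => Real.exp (-u)) FB 1 σ
    have q1 : σ ^ 2 ≤ (μ * s) ^ 2 := pow_le_pow_left₀ n1 h2 2
    have q2 : g ^ 2 ≤ (μ * s) ^ 2 := pow_le_pow_left₀ n2 (by linarith) 2
    have pA : 0 ≤ ∫ a, a ^ 2 ∂FA := integral_nonneg fun x => sq_nonneg x
    have pB : 0 ≤ ∫ b, b ∂FB := integral_nonneg_of_ae (ae_nonneg R.hB)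
    have r1 := mul_le_mul_of_nonneg_left q1 pB
    have r2 := mul_le_mul_of_nonneg_left q2 pA
    have r3 : C * s ^ 2 = C * (∫ t, t ∂FT) * s ^ 2 +
      μ ^ 2 * ((∫ a, a ^ 2 ∂FA) + ∫ b, b ∂FB) / 2 * s ^ 2 := by rw [← hC]; ring
    rw [r3]
    linarith

/-- Two solutions satisfy `|F̂ - Ĝ| ≤ C s²`; applying the operator `n` times improves the bound by
`E[T]ⁿ`. -/
lemma sol_unique (R : Reg FT FA FB) (hμ : 0 ≤ μ) {F G : Measure ℝ}
    (hF : Sol FT FA FB μ F) (hG : Sol FT FA FB μ G) : F = G := by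
  have := hF.1
  have := hG.1
  refine LS_inj hF.2.1 hG.2.1 fun s hs => ?_
  set C := max ((∫ x, x ^ 2 ∂F) / 2) ((∫ x, x ^ 2 ∂G) / 2)
  have key : ∀ n : ℕ, ∀ s, 0 ≤ s → |LS F s - LS G s| ≤ C * (∫ t, t ∂FT) ^ n * s ^ 2 := by
    intro n
    induction n with
    | zero =>
      intro s hs
      rw [pow_zero, mul_one]
      exact (hF.good.mono (le_max_left _ _)).dist_le (hG.good.mono (le_max_right _ _)) hs
    | succ n ih =>
      intro s hs
      rw [hF.eq_Op R hμ hs, hG.eq_Op R hμ hs, pow_succ, ← mul_assoc]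
      exact Op_sub_le R hμ hF.good hG.good ih hs
  have pT : 0 ≤ ∫ t, t ∂FT := integral_nonneg_of_ae (ae_nonneg R.hT)
  have l := ((tendsto_pow_atTop_nhds_zero_of_lt_one pT R.lt).const_mul C).mul_const (s ^ 2)
  rw [mul_zero, zero_mul] at l
  have h0 := ge_of_tendsto' l fun n => key n s hs
  exact sub_eq_zero.1 (abs_nonpos_iff.1 h0)

/-- The bounds in `Good` recover the mean and the finiteness of the second moment. -/
lemma good_moments {F : Measure ℝ} [IsProbabilityMeasure F] (hF : F (Iio 0) = 0)
    (hμ : 0 ≤ μ) {C : ℝ} (h : Good μ C (LS F)) :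
    ∫ x, x ∂F = μ ∧ Integrable (fun x => x ^ 2) F := by
  have ha := app_id
  set s : ℕ → ℝ := fun n => 1 / ((n : ℝ) + 1)
  have e1 : ∫⁻ x, ENNReal.ofReal x ∂F = ENNReal.ofReal μ := by
    have l1 := A_first hF ha
    have l2 : Tendsto (fun n => (1 - LS F (s n)) / s n) atTop (𝓝 μ) := by
      have l3 := (ha.s0.const_mul C).const_sub μ
      rw [mul_zero, sub_zero] at l3
      refine tendsto_of_tendsto_of_tendsto_of_le_of_le l3 tendsto_const_nhds (fun n => ?_)
        (fun n => ?_)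
      · have := h.le _ (ha.nn n)
        dsimp only
        rw [le_div_iff₀ (ha.pos n)]
        linarith
      · have := h.ge _ (ha.nn n)
        dsimp only
        rw [div_le_iff₀ (ha.pos n)]
        linarith
    have := tendsto_nhds_unique l1 ((ENNReal.continuous_ofReal.tendsto _).comp l2)
    simpa using this
  have i1 : Integrable (fun x => x) F :=
    (fin_integrable measurable_id (ae_nonneg hF)).1 (by simp [e1])
  have e2 : ∫ x, x ∂F = μ := by
    rw [integral_eq_lintegral_of_nonneg_ae (ae_nonneg hF) i1.1, e1, ENNReal.toReal_ofReal hμ]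
  refine ⟨e2, (fin_integrable (by fun_prop) (Eventually.of_forall fun x => sq_nonneg x)).1 ?_⟩
  have l1 := A_second hF i1 ha
  have l2 := le_of_tendsto' (b := ENNReal.ofReal C) l1 fun n => by
    refine ENNReal.ofReal_le_ofReal ?_
    have hp := ha.pos n
    rw [div_le_iff₀ (by positivity), e2]
    have := h.le _ (ha.nn n)
    linarith
  exact ENNReal.lt_top_of_mul_ne_top_right (ne_top_of_le_ne_top ENNReal.ofReal_ne_top l2)
    (by simp)

/-- The iterates of the operator, started at the point mass at `μ`, converge geometrically to a
fixed point, which is the Laplace transform of a solution. -/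
lemma sol_exists (R : Reg FT FA FB) (hμ : 0 ≤ μ) : ∃ F, Sol FT FA FB μ F := by
  set τ := ∫ t, t ∂FT with hτ
  have pT : 0 ≤ τ := integral_nonneg_of_ae (ae_nonneg R.hT)
  have hτ1 : 0 < 1 - τ := sub_pos.2 R.lt
  have pB : 0 ≤ ∫ b, b ∂FB := integral_nonneg_of_ae (ae_nonneg R.hB)
  have pA := sq_mean_le R.iA
  rw [R.eA] at pA
  obtain ⟨C, hC⟩ : ∃ C, C * (1 - τ) = μ ^ 2 * ((∫ a, a ^ 2 ∂FA) + ∫ b, b ∂FB) / 2 :=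
    ⟨_, div_mul_cancel₀ _ (ne_of_gt hτ1)⟩
  -- `C` bounds half the second moment of the starting point mass, because `E[A²] ≥ 1`.
  have hC0 : μ ^ 2 / 2 ≤ C := by
    have h1 : μ ^ 2 / 2 ≤ C * (1 - τ) := by
      rw [hC]
      have := mul_le_mul_of_nonneg_left (by linarith : 1 ≤ (∫ a, a ^ 2 ∂FA) + ∫ b, b ∂FB)
        (sq_nonneg μ)
      linarith
    have h2 : 0 ≤ C := nonneg_of_mul_nonneg_left (le_trans (by positivity) h1) hτ1
    nlinarith
  set f : ℕ → ℝ → ℝ := fun n => (Op FT FA FB μ)^[n] (fun s => Real.exp (-(s * μ)))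
  have fs : ∀ n, f (n + 1) = Op FT FA FB μ (f n) := fun n => Function.iterate_succ_apply' _ _ _
  have fg : ∀ n, Good μ C (f n) := by
    intro n
    induction n with
    | zero =>
      refine ⟨CM.exp_neg hμ, fun s _ => ?_, fun s hs => ?_⟩
      · have := Real.one_sub_le_exp_neg (s * μ)
        change _ ≤ Real.exp (-(s * μ))
        linarith
      · have := exp_neg_le (mul_nonneg hs hμ)
        have := mul_le_mul_of_nonneg_right hC0 (sq_nonneg s)
        change Real.exp (-(s * μ)) ≤ _
        linarith
    | succ n ih => rw [fs]; exact Op_good R hμ ih hC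
  have fd : ∀ n : ℕ, ∀ s, 0 ≤ s → |f n s - f (n + 1) s| ≤ C * τ ^ n * s ^ 2 := by
    intro n
    induction n with
    | zero => intro s hs; rw [pow_zero, mul_one]; exact (fg 0).dist_le (fg 1) hs
    | succ n ih =>
      intro s hs
      rw [fs n, fs (n + 1), pow_succ, ← mul_assoc]
      have := Op_sub_le R hμ (fg n) (fg (n + 1)) ih hs
      exact this
  have fd' : ∀ s, 0 ≤ s → ∀ n, dist (f n s) (f (n + 1) s) ≤ C * s ^ 2 * τ ^ n := fun s hs n => by
    have := fd n s hs
    rw [Real.dist_eq]; linarith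
  have hlim : ∀ s, ∃ l, 0 ≤ s → Tendsto (fun n => f n s) atTop (𝓝 l) := fun s => by
    by_cases hs : 0 ≤ s
    · obtain ⟨l, hl⟩ := cauchySeq_tendsto_of_complete
        (cauchySeq_of_le_geometric τ (C * s ^ 2) R.lt (fd' s hs))
      exact ⟨l, fun _ => hl⟩
    · exact ⟨0, fun h => absurd h hs⟩
  choose φ hφ using hlim
  have gφ : Good μ C φ := ⟨CM.of_tendsto (fun n => (fg n).cm) hφ,
    fun s hs => ge_of_tendsto' (hφ s hs) fun n => (fg n).ge s hs,
    fun s hs => le_of_tendsto' (hφ s hs) fun n => (fg n).le s hs⟩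
  have cφ : Tendsto φ (𝓝[>] 0) (𝓝 1) := by
    have := (gφ.continuousOn 0 (mem_Ici.2 le_rfl)).tendsto
    rw [gφ.zero] at this
    exact this.mono_left (nhdsWithin_mono _ Ioi_subset_Ici_self)
  obtain ⟨F, hP, hF0, hLS⟩ := gφ.cm.exists_measure gφ.zero cφ
  have gF : Good μ C (LS F) :=
    ⟨LS_cm hF0, fun s hs => (hLS s hs).symm ▸ gφ.ge s hs, fun s hs => (hLS s hs).symm ▸ gφ.le s hs⟩
  obtain ⟨m1, m2⟩ := good_moments hF0 hμ gF
  refine ⟨F, hP, hF0, m1, m2, fun s hs => ?_⟩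
  rw [rhs_eq R.hT R.hB hμ gF hs]
  have close : ∀ n : ℕ, ∀ s, 0 ≤ s → |f n s - LS F s| ≤ C * τ ^ n / (1 - τ) * s ^ 2 := by
    intro n s hs
    have := dist_le_of_le_geometric_of_tendsto τ (C * s ^ 2) R.lt (fd' s hs) (hφ s hs) n
    rw [Real.dist_eq, ← hLS s hs] at this
    refine this.trans_eq (by ring)
  have l1 : Tendsto (fun n => f (n + 1) s) atTop (𝓝 (Op FT FA FB μ (LS F) s)) := by
    rw [tendsto_iff_dist_tendsto_zero]
    have l := (((tendsto_pow_atTop_nhds_zero_of_lt_one pT R.lt).const_mul C).div_const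
      (1 - τ)).mul_const τ |>.mul_const (s ^ 2)
    simp only [mul_zero, zero_div, zero_mul] at l
    refine squeeze_zero (fun _ => dist_nonneg) (fun n => ?_) l
    rw [Real.dist_eq, fs]
    exact Op_sub_le R hμ (fg n) gF (close n) hs
  rw [hLS s hs]
  exact tendsto_nhds_unique ((hφ s hs).comp (tendsto_add_atTop_nat 1)) l1

end Contraction

/-! ### The characterization -/

/-- Theorem 1: the moment conditions hold iff the power-mixture functional equation has
exactly one solution with mean `μ` and finite second moment; moreover, the solution has
variance `((Var[A] + E[B] + E[T])/(1 − E[T])) μ²`. -/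
theorem stmt0 (μ : ℝ) (hμ : 0 < μ) (FT FA FB : Measure ℝ)
    [IsProbabilityMeasure FT] [IsProbabilityMeasure FA] [IsProbabilityMeasure FB]
    (hT : FT (Set.Iio 0) = 0) (hA : FA (Set.Iio 0) = 0) (hB : FB (Set.Iio 0) = 0) :
    (Cond FT FA FB ↔ (∃! F : Measure ℝ, Sol FT FA FB μ F)) ∧
    (Cond FT FA FB → ∀ F : Measure ℝ, Sol FT FA FB μ F →
      (∫ x, x ^ 2 ∂F) - (∫ x, x ∂F) ^ 2 =
        (((∫ a, a ^ 2 ∂FA) - (∫ a, a ∂FA) ^ 2) + (∫ b, b ∂FB) + (∫ t, t ∂FT)) /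
          (1 - (∫ t, t ∂FT)) * μ ^ 2) := by
  refine ⟨⟨fun h => ?_, fun ⟨F, hF, _⟩ => (second_order hT hA hB hμ hF).1⟩, fun h F hF => ?_⟩
  · have R := h.reg hT hA hB
    obtain ⟨F, hF⟩ := sol_exists R hμ.le
    exact ⟨F, hF, fun G hG => sol_unique R hμ.le hG hF⟩
  · have R := h.reg hT hA hB
    have key := (second_order hT hA hB hμ hF).2
    have h1 : 1 - ∫ t, t ∂FT ≠ 0 := (sub_pos.2 R.lt).ne'
    rw [hF.2.2.1, R.eA, div_mul_eq_mul_div, eq_div_iff h1]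
    linarith
end

section
/- Let (G_n)_{n≥1} be a sequence of probability distributions on [0,∞) such that (a) all G_n have the same finite first two moments: ∫₀^∞ x dG_n(x) = m₁ and ∫₀^∞ x² dG_n(x) = m₂ for all n, and (b) the Laplace–Stieltjes transforms Ĝ_n form a pointwise decreasing sequence of functions on [0,∞) (Ĝ_{n+1}(s) ≤ Ĝ_n(s) for all s ≥ 0 and all n). Then the pointwise limit Ĝ_∞(s) = lim_{n→∞} Ĝ_n(s) exists for every s ≥ 0, and Ĝ_∞ is the Laplace–Stieltjes transform of a probability distribution G_∞ on [0,∞) whose first moment equals m₁ and whose second moment lies in the interval [m₁², m₂]. -/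
/-!
The second-moment bound makes the `G n` tight, so by Prokhorov's theorem they have a weak limit
point `P`; it is convenient to take the limit along a nonprincipal ultrafilter rather than along a
subsequence. Testing against bounded continuous functions shows that `P` lives on `[0, ∞)`, that
the Laplace–Stieltjes transforms converge to that of `P` along the ultrafilter, and (truncating
`x ^ 2`) that the second moment of `P` is at most `m2`. Monotonicity in `n` upgrades the
ultrafilter convergence of the transforms to convergence of the full sequence. The first moment
passes to the limit because the truncation error of `x` at level `K` is at most `m2 / K`, uniformly
over all measures involved (`abs_integral_sub_trunc_le`). Finally `m1 ^ 2 ≤ ∫ x ^ 2 ∂P` is the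
nonnegativity of the variance.
-/

open MeasureTheory

open Filter Topology

/-- On `[0, ∞)` one has `0 ≤ x - min x K ≤ x ^ 2 / K`, hence the first moment is approximated by
the truncated one uniformly over measures with bounded second moment. -/
lemma abs_integral_sub_trunc_le (μ : Measure ℝ) [IsProbabilityMeasure μ]
    (hs : μ (Set.Iio 0) = 0) (hi : Integrable (fun x => x ^ 2) μ) {m2 : ℝ}
    (hm : (∫ x, x ^ 2 ∂μ) ≤ m2) {K : ℝ} (hK : 0 < K) :
    |(∫ x, x ∂μ) - ∫ x, min (max x 0) K ∂μ| ≤ m2 / K := by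
  have hx : Integrable (fun x : ℝ => x) μ := by
    refine Integrable.mono' (hi.add (integrable_const 1)) (by fun_prop) (ae_of_all _ fun x => ?_)
    simp only [Pi.add_apply, Real.norm_eq_abs]
    rw [abs_le]; constructor <;> nlinarith [sq_nonneg (x - 1), sq_nonneg (x + 1)]
  have hmin : Integrable (fun x : ℝ => min (max x 0) K) μ := by
    refine Integrable.mono' (integrable_const K) (by fun_prop) (ae_of_all _ fun x => ?_)
    rw [Real.norm_eq_abs, abs_of_nonneg (le_min (le_max_right _ _) hK.le)]
    exact min_le_right _ _
  have hpos : ∀ᵐ x ∂μ, 0 ≤ x := by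
    rw [ae_iff]; simpa [Set.Iio] using hs
  rw [← integral_sub hx hmin, abs_of_nonneg]
  · refine (integral_mono_ae (hx.sub hmin) (hi.div_const K) ?_).trans ?_
    · filter_upwards [hpos] with x hx0
      simp only [Pi.sub_apply, max_eq_left hx0]
      rw [le_div_iff₀ hK]
      rcases le_total x K with h | h
      · rw [min_eq_left h]; nlinarith [sq_nonneg x]
      · rw [min_eq_right h]; nlinarith [sq_nonneg (x - K)]
    · rw [integral_div]; gcongr
  · refine integral_nonneg_of_ae ?_
    filter_upwards [hpos] with x hx0
    simp [max_eq_left hx0]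

/-- A uniform second-moment bound forces weak convergence along every ultrafilter on the index
set, by tightness and Prokhorov's theorem. -/
lemma exists_weak_limit (G : ℕ → ProbabilityMeasure ℝ) (m2 : ℝ)
    (hint : ∀ n, Integrable (fun x => x ^ 2) (G n : Measure ℝ))
    (hm2 : ∀ n, (∫ x, x ^ 2 ∂(G n : Measure ℝ)) = m2) (U : Ultrafilter ℕ) :
    ∃ P : ProbabilityMeasure ℝ, ∀ f : ℝ → ℝ, Continuous f → ∀ C : ℝ, (∀ x, |f x| ≤ C) →
      Tendsto (fun n => ∫ x, f x ∂(G n : Measure ℝ)) U (𝓝 (∫ x, f x ∂(P : Measure ℝ))) := by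
  have hu : Tendsto (fun n : ℕ => (m2 / ((n : ℝ) + 1)).toNNReal) atTop (𝓝 0) := by
    have h : Tendsto (fun n : ℕ => m2 / ((n : ℝ) + 1)) atTop (𝓝 0) :=
      tendsto_const_nhds.div_atTop (tendsto_atTop_add_const_right _ _ tendsto_natCast_atTop_atTop)
    simpa [Function.comp_def] using (continuous_real_toNNReal.tendsto 0).comp h
  have hc := isCompact_setOfPred_probabilityMeasure_mass_eq_compl_isCompact_le hu
    (K := fun n : ℕ => Metric.closedBall (0 : ℝ) ((n : ℝ) + 1))
    (fun n => isCompact_closedBall _ _) (Or.inl inferInstance)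
  obtain ⟨P, -, hP⟩ := hc.ultrafilter_le_nhds (U.map G) (by
    refine le_principal_iff.2 (Filter.mem_map.2 (Filter.univ_mem' fun k n => ?_))
    have hn : (0 : ℝ) < (n : ℝ) + 1 := by positivity
    have h1 := mul_meas_ge_le_integral_of_nonneg (μ := (G k : Measure ℝ))
      (ae_of_all _ fun x : ℝ => sq_nonneg x) (hint k) ((n : ℝ) + 1)
    rw [hm2, mul_comm, ← le_div_iff₀ hn] at h1
    rw [← NNReal.coe_le_coe]
    refine le_trans ?_ (Real.le_coe_toNNReal _)
    refine le_trans ?_ h1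
    change (G k : Measure ℝ).real _ ≤ _
    refine measureReal_mono ?_
    intro x hx
    simp only [Set.mem_compl_iff, Metric.mem_closedBall, dist_zero_right, Real.norm_eq_abs,
      not_le] at hx
    change (n : ℝ) + 1 ≤ x ^ 2
    have : (0 : ℝ) ≤ n := Nat.cast_nonneg n
    nlinarith [sq_abs x])
  refine ⟨P, fun f hf C hC => ?_⟩
  have hP' : Tendsto G U (𝓝 P) := hP
  exact (ProbabilityMeasure.tendsto_iff_forall_integral_tendsto.1 hP')
    (BoundedContinuousFunction.ofNormedAddCommGroup f hf C hC)

/-- A uniform bound on the truncated second moments bounds the second moment itself, by monotone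
convergence. -/
lemma second_moment_of_trunc (μ : Measure ℝ) [IsProbabilityMeasure μ] (m2 : ℝ)
    (h : ∀ k : ℕ, (∫ x, min (x ^ 2) (k : ℝ) ∂μ) ≤ m2) :
    Integrable (fun x => x ^ 2) μ ∧ (∫ x, x ^ 2 ∂μ) ≤ m2 := by
  have h0 : 0 ≤ m2 := le_trans (integral_nonneg fun x => by positivity) (h 0)
  have hl : ∫⁻ x, ENNReal.ofReal (x ^ 2) ∂μ ≤ ENNReal.ofReal m2 := by
    refine le_of_tendsto' (f := fun k : ℕ => ∫⁻ x, ENNReal.ofReal (min (x ^ 2) (k : ℝ)) ∂μ)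
      (lintegral_tendsto_of_tendsto_of_monotone (fun k => by fun_prop) ?_ ?_) (x := atTop) ?_
    · refine ae_of_all _ fun x a b hab => ?_
      dsimp only
      gcongr
    · refine ae_of_all _ fun x => tendsto_const_nhds.congr' ?_
      obtain ⟨N, hN⟩ := exists_nat_ge (x ^ 2)
      filter_upwards [eventually_ge_atTop N] with k hk
      rw [min_eq_left (hN.trans (by exact_mod_cast hk))]
    · intro k
      rw [← ofReal_integral_eq_lintegral_ofReal]
      · exact ENNReal.ofReal_le_ofReal (h k)
      · refine Integrable.mono' (integrable_const (k : ℝ)) (by fun_prop) (ae_of_all _ fun x => ?_)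
        rw [Real.norm_eq_abs, abs_of_nonneg (by positivity)]
        exact min_le_right _ _
      · exact ae_of_all _ fun x => by positivity
  constructor
  · refine ⟨by fun_prop, ?_⟩
    rw [hasFiniteIntegral_iff_ofReal (ae_of_all _ fun x => by positivity)]
    exact hl.trans_lt ENNReal.ofReal_lt_top
  · rw [integral_eq_lintegral_of_nonneg_ae (ae_of_all _ fun x => by positivity) (by fun_prop)]
    exact ENNReal.toReal_le_of_le_ofReal h0 hl

/-- For a measure carried by `[0, ∞)` the transform is the integral of a bounded continuous
function on the whole line. -/
lemma LS_eq_max (μ : Measure ℝ) (hs : μ (Set.Iio 0) = 0) (s : ℝ) :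
    LS μ s = ∫ x, Real.exp (-(s * max x 0)) ∂μ := by
  have hpos : ∀ᵐ x ∂μ, 0 ≤ x := by
    rw [ae_iff]; simpa [Set.Iio] using hs
  refine integral_congr_ae ?_
  filter_upwards [hpos] with x hx
  rw [max_eq_left hx]

/-- Lemma 9: if `(G n)` is a sequence of probability distributions on `[0,∞)` all having
the same finite first two moments `m₁, m₂`, and whose LS-transforms form a pointwise
decreasing sequence on `[0,∞)`, then the pointwise limit of the LS-transforms exists and
is the LS-transform of a probability distribution `G∞` on `[0,∞)` with first moment `m₁`
and second moment in `[m₁², m₂]`. -/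
theorem stmt15 (G : ℕ → Measure ℝ) (m1 m2 : ℝ)
    (hprob : ∀ n, IsProbabilityMeasure (G n)) (hsupp : ∀ n, (G n) (Set.Iio 0) = 0)
    (hint : ∀ n, Integrable (fun x => x ^ 2) (G n))
    (hm1 : ∀ n, (∫ x, x ∂(G n)) = m1) (hm2 : ∀ n, (∫ x, x ^ 2 ∂(G n)) = m2)
    (hdec : ∀ (n : ℕ) (s : ℝ), 0 ≤ s → LS (G (n + 1)) s ≤ LS (G n) s) :
    ∃ Ginf : Measure ℝ, IsProbabilityMeasure Ginf ∧ Ginf (Set.Iio 0) = 0 ∧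
      (∀ s : ℝ, 0 ≤ s →
        Filter.Tendsto (fun n => LS (G n) s) Filter.atTop (nhds (LS Ginf s))) ∧
      (∫ x, x ∂Ginf) = m1 ∧ Integrable (fun x => x ^ 2) Ginf ∧
      m1 ^ 2 ≤ (∫ x, x ^ 2 ∂Ginf) ∧ (∫ x, x ^ 2 ∂Ginf) ≤ m2 := by
  let U : Ultrafilter ℕ := hyperfilter ℕ
  have hU : (U : Filter ℕ) ≤ atTop := Nat.hyperfilter_le_atTop
  obtain ⟨P, hP⟩ := exists_weak_limit (fun n => ⟨G n, hprob n⟩) m2 hint hm2 U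
  change ∀ f : ℝ → ℝ, Continuous f → ∀ C : ℝ, (∀ x, |f x| ≤ C) →
    Tendsto (fun n => ∫ x, f x ∂(G n)) U (𝓝 (∫ x, f x ∂(P : Measure ℝ))) at hP
  set μ : Measure ℝ := (P : Measure ℝ) with hμ
  have hpos : ∀ n, ∀ᵐ x ∂(G n), 0 ≤ x := fun n => by
    rw [ae_iff]; simpa [Set.Iio] using hsupp n
  -- The test function `min (max (-x) 0) 1` is positive exactly on the negative half-line.
  have hsμ : μ (Set.Iio 0) = 0 := by
    have hb : ∀ x : ℝ, |min (max (-x) 0) 1| ≤ 1 := fun x => by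
      rw [abs_of_nonneg (by positivity)]; exact min_le_right _ _
    have h1 := hP (fun x => min (max (-x) 0) 1) (by fun_prop) 1 hb
    have h2 : ∀ n, ∫ x, min (max (-x) 0) 1 ∂(G n) = 0 := fun n => by
      refine integral_eq_zero_of_ae ?_
      filter_upwards [hpos n] with x hx
      simp [hx]
    simp only [h2] at h1
    have h3 := tendsto_nhds_unique h1 tendsto_const_nhds
    rw [integral_eq_zero_iff_of_nonneg (fun x => by positivity)
      (Integrable.mono' (integrable_const 1) (by fun_prop) (ae_of_all _ hb))] at h3
    have h4 : ∀ᵐ x ∂μ, ¬ x < 0 := by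
      filter_upwards [h3] with x hx hx0
      have : 0 < min (max (-x) 0) 1 := lt_min (lt_max_of_lt_left (by linarith)) one_pos
      exact this.ne' hx
    rw [ae_iff] at h4
    simpa [Set.Iio] using h4
  obtain ⟨hiμ, hmμ⟩ := second_moment_of_trunc μ m2 fun k => by
    have hb : ∀ x : ℝ, |min (x ^ 2) (k : ℝ)| ≤ k := fun x => by
      rw [abs_of_nonneg (by positivity)]; exact min_le_right _ _
    refine le_of_tendsto' (hP (fun x => min (x ^ 2) (k : ℝ)) (by fun_prop) k hb) fun n => ?_
    rw [← hm2 n]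
    exact integral_mono (Integrable.mono' (integrable_const (k : ℝ)) (by fun_prop)
      (ae_of_all _ hb)) (hint n) fun x => min_le_left _ _
  have hmean : (∫ x, x ∂μ) = m1 := by
    have key : ∀ k : ℕ, |(∫ x, x ∂μ) - m1| ≤ 2 * m2 / ((k : ℝ) + 1) := fun k => by
      have hK : (0 : ℝ) < (k : ℝ) + 1 := by positivity
      have h1 := abs_integral_sub_trunc_le μ hsμ hiμ hmμ hK
      have h2 : |m1 - ∫ x, min (max x 0) ((k : ℝ) + 1) ∂μ| ≤ m2 / ((k : ℝ) + 1) := by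
        refine le_of_tendsto' ((tendsto_const_nhds.sub (hP (fun x => min (max x 0) ((k : ℝ) + 1))
          (by fun_prop) ((k : ℝ) + 1) fun x => ?_)).abs) fun n => ?_
        · rw [abs_of_nonneg (by positivity)]; exact min_le_right _ _
        · rw [← hm1 n]
          exact abs_integral_sub_trunc_le (G n) (hsupp n) (hint n) (hm2 n).le hK
      rw [mul_div_assoc]
      rw [abs_le] at *
      constructor <;> linarith [h1.1, h1.2, h2.1, h2.2]
    have hlim : Tendsto (fun k : ℕ => 2 * m2 / ((k : ℝ) + 1)) atTop (𝓝 0) :=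
      tendsto_const_nhds.div_atTop (tendsto_atTop_add_const_right _ _ tendsto_natCast_atTop_atTop)
    have := abs_nonpos_iff.1 (ge_of_tendsto' hlim key)
    linarith
  refine ⟨μ, inferInstance, hsμ, fun s hs => ?_, hmean, hiμ, ?_, hmμ⟩
  · have hanti : Antitone fun n => LS (G n) s := antitone_nat_of_succ_le fun n => hdec n s hs
    have hbdd : BddBelow (Set.range fun n => LS (G n) s) :=
      ⟨0, by rintro _ ⟨n, rfl⟩; exact integral_nonneg fun x => (Real.exp_pos _).le⟩
    have h1 := tendsto_atTop_ciInf hanti hbdd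
    have h2 := hP (fun x => Real.exp (-(s * max x 0))) (by fun_prop) 1 fun x => by
      rw [abs_of_pos (Real.exp_pos _), Real.exp_le_one_iff]
      have : 0 ≤ s * max x 0 := mul_nonneg hs (le_max_right _ _)
      linarith
    simp only [← LS_eq_max _ hsμ, ← LS_eq_max _ (hsupp _)] at h2
    rwa [tendsto_nhds_unique (h1.mono_left hU) h2] at h1
  · have hid : MemLp (fun x : ℝ => x) 2 μ := (memLp_two_iff_integrable_sq (by fun_prop)).2 hiμ
    have hv := ProbabilityTheory.variance_nonneg (fun x : ℝ => x) μ
    rw [ProbabilityTheory.variance_eq_sub hid, hmean] at hv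
    simp only [Pi.pow_apply] at hv
    linarith
end

section
/- Fix μ ∈ (0,∞) and a > 0, and let F_T be the beta-type distribution on (0,1) with cumulative distribution function F_T(x) = 1 − (1 − x)^a for x ∈ (0,1). Then among probability distributions F on [0,∞) with mean μ and finite second moment, the Gamma distribution with shape parameter a and scale parameter b = μ/a (having density f(x) = x^{a−1}e^{−x/b}/(Γ(a)·b^a) on (0,∞)) is the unique one satisfying the functional equation F̂(s) = exp(−σ(s)) for all s ≥ 0, where σ(s) = ∫₀^∞ (1 − F̂(ts))/t dF_T(t) with the integrand at t = 0 defined by continuity to equal μs. -/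
/-!
Write `b = μ / a` and let `F_T` be the beta-type law, whose mean `1 / (a + 1)` is less than `1`.

*Uniqueness.* If `F` and `G` have the same mean and finite second moments, then
`|F̂(s) - Ĝ(s)| ≤ C s²`. Since `x ↦ e^{-x}` is 1-Lipschitz on `[0,∞)`, a bound of this form for two
solutions improves to
`|F̂(s) - Ĝ(s)| ≤ ∫ |F̂(ts) - Ĝ(ts)| / t dF_T(t) ≤ C s² ∫ t dF_T(t) = C s² / (a + 1)`,
and iterating forces `F̂ = Ĝ` (`IsSol.unique`). A law on `[0,∞)` is recovered from its Laplace
transform in `ext_of_LS_nat`.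

*The Gamma law is a solution.* Here `F̂(s) = (1 + b s)^{-a}`, and Fubini together with
`∫₀¹ a (1-t)^{a-1} (1+ct)^{-a-1} dt = 1/(1+c)` (`beta_integral`) gives `σ(s) = a log (1 + b s)`
(`gammaMeas_sigma`), that is `exp (-σ(s)) = F̂(s)`.
-/

open MeasureTheory

/-- The beta-type distribution on `(0,1)` with CDF `F_T(x) = 1 − (1−x)^a`, i.e. with
Lebesgue density `a (1−x)^{a−1}` on `(0,1)`. -/
noncomputable def betaT (a : ℝ) : Measure ℝ :=
  (volume.restrict (Set.Ioo (0:ℝ) 1)).withDensity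
    (fun t => ENNReal.ofReal (a * (1 - t) ^ (a - 1)))

/-- The Gamma distribution with shape `a` and scale `b`: density
`x^{a−1} e^{−x/b}/(Γ(a) b^a)` on `(0,∞)`. -/
noncomputable def gammaMeas (a b : ℝ) : Measure ℝ :=
  (volume.restrict (Set.Ioi (0:ℝ))).withDensity
    (fun x => ENNReal.ofReal (x ^ (a - 1) * Real.exp (-(x / b)) / (Real.Gamma a * b ^ a)))

/-! ### Laplace transforms determine laws on the half-line -/

open ProbabilityTheory in
/-- A law `F` on `[0,∞)` is determined by its Laplace transform at the natural numbers: these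
values are the moments of the image of `F` under `x ↦ e^{-x}`, which lives on `[0,1]` and
therefore has an entire moment generating function `t ↦ ∑ LS F n tⁿ / n!`. -/
lemma ext_of_LS_nat {F G : Measure ℝ} [IsProbabilityMeasure F] [IsProbabilityMeasure G]
    (hF : ∀ᵐ x ∂F, 0 ≤ x) (hG : ∀ᵐ x ∂G, 0 ≤ x) (h : ∀ n : ℕ, LS F n = LS G n) : F = G := by
  have hgm : Measurable (fun x : ℝ => Real.exp (-x)) := by fun_prop
  have hbd : ∀ {H : Measure ℝ}, (∀ᵐ x ∂H, 0 ≤ x) → IsProbabilityMeasure H → ∀ t : ℝ,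
      Integrable (fun x => Real.exp (t * Real.exp (-x))) H := by
    intro H hH _ t
    refine Integrable.of_bound (by fun_prop) (Real.exp |t|) ?_
    filter_upwards [hH] with x hx
    rw [Real.norm_eq_abs, Real.abs_exp, Real.exp_le_exp]
    have h1 : Real.exp (-x) ≤ 1 := Real.exp_le_one_iff.2 (by linarith)
    calc t * Real.exp (-x) ≤ |t| * Real.exp (-x) :=
          mul_le_mul_of_nonneg_right (le_abs_self t) (Real.exp_pos _).le
      _ ≤ |t| * 1 := mul_le_mul_of_nonneg_left h1 (abs_nonneg t)
      _ = |t| := mul_one _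
  -- Expand the outer exponential and integrate term by term.
  have hmgf : ∀ {H : Measure ℝ}, (∀ᵐ x ∂H, 0 ≤ x) → IsProbabilityMeasure H → ∀ t : ℝ,
      mgf (fun x : ℝ => Real.exp (-x)) H t = ∑' n : ℕ, t ^ n / n.factorial * LS H n := by
    intro H hH _ t
    have hle : ∀ n : ℕ, ∀ᵐ x ∂H,
        ‖t ^ n / n.factorial * Real.exp (-(n * x))‖ ≤ |t| ^ n / n.factorial := by
      intro n
      filter_upwards [hH] with x hx
      rw [norm_mul, Real.norm_eq_abs, Real.norm_eq_abs, Real.abs_exp, abs_div, abs_pow,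
        Nat.abs_cast]
      refine mul_le_of_le_one_right (by positivity) (Real.exp_le_one_iff.2 ?_)
      have : 0 ≤ (n : ℝ) * x := by positivity
      linarith
    have hint : ∀ n : ℕ, Integrable (fun x => t ^ n / n.factorial * Real.exp (-(n * x))) H :=
      fun n => Integrable.of_bound (by fun_prop) _ (hle n)
    have hsum := hasSum_integral_of_summable_integral_norm hint (by
      refine Summable.of_nonneg_of_le (fun n => integral_nonneg fun x => norm_nonneg _) (fun n => ?_)
        (Real.summable_pow_div_factorial |t|)
      calc ∫ x, ‖t ^ n / n.factorial * Real.exp (-(n * x))‖ ∂H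
          ≤ ∫ _, |t| ^ n / n.factorial ∂H :=
            integral_mono_ae (hint n).norm (integrable_const _) (hle n)
        _ = _ := by simp)
    have e1 : ∀ n : ℕ, ∫ x, t ^ n / n.factorial * Real.exp (-(n * x)) ∂H
        = t ^ n / n.factorial * LS H n := fun n => integral_const_mul _ _
    simp_rw [e1] at hsum
    rw [hsum.tsum_eq, mgf]
    refine integral_congr_ae (ae_of_all _ fun x => ?_)
    simp only
    rw [congrFun Real.exp_eq_exp_ℝ (t * _), NormedSpace.exp_eq_tsum_div]
    refine tsum_congr fun n => ?_
    rw [mul_pow, ← Real.exp_nat_mul, mul_neg]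
    ring
  have hXY : mgf (fun x : ℝ => Real.exp (-x)) F = mgf (fun x : ℝ => Real.exp (-x)) G := by
    funext t
    rw [hmgf hF inferInstance, hmgf hG inferInstance]
    simp_rw [h]
  have huniv : integrableExpSet (fun x : ℝ => Real.exp (-x)) F = Set.univ :=
    Set.eq_univ_of_forall fun t => hbd hF inferInstance t
  have hc := eqOn_complexMGF_of_mgf hXY
  have hmap := Measure.ext_of_complexMGF_eq (μ := F) (μ' := G) hgm.aemeasurable hgm.aemeasurable
    (funext fun z => hc (by simp [huniv]))
  -- `x ↦ e^{-x}` has the measurable left inverse `y ↦ -log y`, so the law can be recovered.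
  have hlog : Measurable (fun y : ℝ => -Real.log y) := by fun_prop
  have hid : (fun y : ℝ => -Real.log y) ∘ (fun x : ℝ => Real.exp (-x)) = id := by
    funext x; simp
  have := congrArg (Measure.map (fun y : ℝ => -Real.log y)) hmap
  rwa [Measure.map_map hlog hgm, Measure.map_map hlog hgm, hid, Measure.map_id,
    Measure.map_id] at this

/-! ### Taylor bounds for the Laplace transform -/

lemma integrable_exp_neg_mul {F : Measure ℝ} [IsProbabilityMeasure F] (hF : ∀ᵐ x ∂F, 0 ≤ x)
    {s : ℝ} (hs : 0 ≤ s) : Integrable (fun x => Real.exp (-(s * x))) F := by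
  refine Integrable.of_bound (by fun_prop) 1 ?_
  filter_upwards [hF] with x hx
  rw [Real.norm_eq_abs, Real.abs_exp, Real.exp_le_one_iff]
  nlinarith

lemma integrable_id_of_sq {F : Measure ℝ} [IsProbabilityMeasure F]
    (h2 : Integrable (fun x => x ^ 2) F) : Integrable (fun x : ℝ => x) F := by
  refine Integrable.mono' (h2.add (integrable_const 1)) (by fun_prop) (ae_of_all _ fun x => ?_)
  simp only [Pi.add_apply, Real.norm_eq_abs]
  nlinarith [sq_abs x, sq_nonneg (|x| - 1)]

lemma exp_neg_le_quadratic {y : ℝ} (hy : 0 ≤ y) : Real.exp (-y) ≤ 1 - y + y ^ 2 := by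
  rcases le_total y 1 with h | h
  · have := (abs_le.1 (Real.abs_exp_sub_one_sub_id_le (x := -y) (by
      rw [abs_neg, abs_of_nonneg hy]; exact h))).2
    nlinarith
  · have : Real.exp (-y) ≤ 1 := Real.exp_le_one_iff.2 (by linarith)
    nlinarith

lemma one_sub_le_LS {F : Measure ℝ} [IsProbabilityMeasure F] (hF : ∀ᵐ x ∂F, 0 ≤ x)
    (h1 : Integrable (fun x : ℝ => x) F) {s : ℝ} (hs : 0 ≤ s) :
    1 - (∫ x, x ∂F) * s ≤ LS F s := by
  have : ∫ x, (1 - s * x) ∂F ≤ LS F s :=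
    integral_mono_ae ((integrable_const _).sub (h1.const_mul s)) (integrable_exp_neg_mul hF hs)
      (ae_of_all _ fun x => by have := Real.add_one_le_exp (-(s * x)); simp only; linarith)
  rw [integral_sub (integrable_const _) (h1.const_mul s), integral_const_mul] at this
  simp at this
  linarith

lemma LS_le_quadratic {F : Measure ℝ} [IsProbabilityMeasure F] (hF : ∀ᵐ x ∂F, 0 ≤ x)
    (h2 : Integrable (fun x : ℝ => x ^ 2) F) {s : ℝ} (hs : 0 ≤ s) :
    LS F s ≤ 1 - (∫ x, x ∂F) * s + (∫ x, x ^ 2 ∂F) * s ^ 2 := by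
  have h1 := integrable_id_of_sq h2
  have : LS F s ≤ ∫ x, ((1 - s * x) + s ^ 2 * x ^ 2) ∂F := by
    refine integral_mono_ae (integrable_exp_neg_mul hF hs)
      (((integrable_const _).sub (h1.const_mul s)).add (h2.const_mul (s ^ 2))) ?_
    filter_upwards [hF] with x hx
    have := exp_neg_le_quadratic (mul_nonneg hs hx)
    rw [mul_pow] at this
    exact this
  rw [integral_add (f := fun x => 1 - s * x) ((integrable_const _).sub (h1.const_mul s))
      (h2.const_mul _),
    integral_sub (integrable_const _) (h1.const_mul s), integral_const_mul,
    integral_const_mul] at this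
  simp at this
  linarith

lemma LS_le_one {F : Measure ℝ} [IsProbabilityMeasure F] (hF : ∀ᵐ x ∂F, 0 ≤ x) {s : ℝ}
    (hs : 0 ≤ s) : LS F s ≤ 1 := by
  have : LS F s ≤ ∫ _, (1 : ℝ) ∂F := by
    refine integral_mono_ae (integrable_exp_neg_mul hF hs) (integrable_const _) ?_
    filter_upwards [hF] with x hx
    exact Real.exp_le_one_iff.2 (by nlinarith)
  simpa using this

lemma measurable_LS (F : Measure ℝ) [IsProbabilityMeasure F] : Measurable (LS F) := by
  have : StronglyMeasurable (fun p : ℝ × ℝ => Real.exp (-(p.1 * p.2))) :=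
    Measurable.stronglyMeasurable (by fun_prop)
  exact this.integral_prod_right.measurable

/-! ### The beta-type law -/

lemma betaDensity_intervalIntegrable {a : ℝ} (ha : 0 < a) :
    IntervalIntegrable (fun t : ℝ => a * (1 - t) ^ (a - 1)) volume 0 1 := by
  have h := (intervalIntegral.intervalIntegrable_rpow' (a := 0) (b := 1) (r := a - 1)
    (by linarith)).comp_sub_left 1
  simp only [sub_zero, sub_self] at h
  exact h.symm.const_mul a

lemma betaDensity_integrableOn {a : ℝ} (ha : 0 < a) :
    IntegrableOn (fun t : ℝ => a * (1 - t) ^ (a - 1)) (Set.Ioo 0 1) :=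
  ((intervalIntegrable_iff_integrableOn_Ioc_of_le zero_le_one).1
    (betaDensity_intervalIntegrable ha)).mono_set Set.Ioo_subset_Ioc_self

lemma betaT_integral {a : ℝ} (ha : 0 < a) (f : ℝ → ℝ) :
    ∫ t, f t ∂(betaT a) = ∫ t in Set.Ioo (0 : ℝ) 1, a * (1 - t) ^ (a - 1) * f t := by
  rw [betaT, integral_withDensity_eq_integral_toReal_smul (by fun_prop) (by simp)]
  refine setIntegral_congr_fun measurableSet_Ioo fun t ht => ?_
  have : 0 ≤ a * (1 - t) ^ (a - 1) := mul_nonneg ha.le (Real.rpow_nonneg (by linarith [ht.2]) _)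
  simp [ENNReal.toReal_ofReal this]

lemma betaT_integral' {a : ℝ} (ha : 0 < a) (f : ℝ → ℝ) :
    ∫ t, f t ∂(betaT a) = ∫ t in (0 : ℝ)..1, a * (1 - t) ^ (a - 1) * f t := by
  rw [betaT_integral ha, intervalIntegral.integral_of_le zero_le_one, integral_Ioc_eq_integral_Ioo]

lemma betaT_finite {a : ℝ} (ha : 0 < a) : IsFiniteMeasure (betaT a) :=
  isFiniteMeasure_withDensity_ofReal (betaDensity_integrableOn ha).2

lemma betaT_ae_mem (a : ℝ) : ∀ᵐ t ∂(betaT a), t ∈ Set.Ioo (0 : ℝ) 1 :=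
  (withDensity_absolutelyContinuous _ _).ae_le (ae_restrict_mem measurableSet_Ioo)

/-- The mean of the beta-type law is `1 / (a + 1)`; that it is `< 1` is what makes the
functional equation contracting. -/
lemma betaT_mean {a : ℝ} (ha : 0 < a) : ∫ t, t ∂(betaT a) = 1 / (a + 1) := by
  rw [betaT_integral' ha]
  have h := intervalIntegral.integral_eq_sub_of_hasDerivAt_of_le (a := 0) (b := 1)
    (f := fun t : ℝ => -(t * (1 - t) ^ a) - (1 - t) ^ (a + 1) / (a + 1))
    (f' := fun t => a * (1 - t) ^ (a - 1) * t) zero_le_one ?_ ?_ ?_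
  · rw [h]
    simp [Real.zero_rpow ha.ne', Real.zero_rpow (by linarith : a + 1 ≠ 0)]
  · refine Continuous.continuousOn ?_
    have c1 : Continuous fun t : ℝ => (1 - t) ^ a :=
      (continuous_const.sub continuous_id).rpow_const fun _ => Or.inr ha.le
    have c2 : Continuous fun t : ℝ => (1 - t) ^ (a + 1) :=
      (continuous_const.sub continuous_id).rpow_const fun _ => Or.inr (by linarith)
    fun_prop
  · intro t ht
    have hd : HasDerivAt (fun t : ℝ => 1 - t) (-1) t := by
      simpa using (hasDerivAt_id t).const_sub 1
    have hne : 1 - t ≠ 0 := by linarith [ht.2]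
    have d1 := hd.rpow_const (p := a) (Or.inl hne)
    have d2 := (hd.rpow_const (p := a + 1) (Or.inl hne)).div_const (a + 1)
    refine (((hasDerivAt_id t).mul d1).neg.sub d2).congr_deriv ?_
    simp only [id, add_sub_cancel_right]
    field_simp
    ring
  · exact (betaDensity_intervalIntegrable ha).mul_continuousOn continuousOn_id

/-! ### Uniqueness by contraction -/

lemma sigma_integrable {F : Measure ℝ} [IsProbabilityMeasure F] {a μ : ℝ} (ha : 0 < a)
    (hF : ∀ᵐ x ∂F, 0 ≤ x) (h1 : Integrable (fun x : ℝ => x) F) (hm : ∫ x, x ∂F = μ)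
    {s : ℝ} (hs : 0 ≤ s) :
    Integrable (fun t => if t = 0 then μ * s else (1 - LS F (t * s)) / t) (betaT a) := by
  have := betaT_finite ha
  have hmeas := measurable_LS F
  refine Integrable.of_bound (C := μ * s) (Measurable.aestronglyMeasurable ?_) ?_
  · exact Measurable.ite (measurableSet_singleton 0) measurable_const (by fun_prop)
  · filter_upwards [betaT_ae_mem a] with t ht
    rw [if_neg ht.1.ne', Real.norm_eq_abs, abs_of_nonneg, div_le_iff₀ ht.1]
    · have := one_sub_le_LS hF h1 (mul_nonneg ht.1.le hs)
      rw [hm] at this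
      linarith
    · exact div_nonneg (by linarith [LS_le_one hF (mul_nonneg ht.1.le hs)]) ht.1.le

lemma sigma_nonneg {F : Measure ℝ} [IsProbabilityMeasure F] {a μ : ℝ}
    (hF : ∀ᵐ x ∂F, 0 ≤ x) {s : ℝ} (hs : 0 ≤ s) : 0 ≤ sigmaT F (betaT a) μ s := by
  refine integral_nonneg_of_ae ?_
  filter_upwards [betaT_ae_mem a] with t ht
  rw [if_neg ht.1.ne']
  exact div_nonneg (by linarith [LS_le_one hF (mul_nonneg ht.1.le hs)]) ht.1.le

lemma abs_exp_neg_sub_le {x y : ℝ} (hx : 0 ≤ x) (hy : 0 ≤ y) :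
    |Real.exp (-x) - Real.exp (-y)| ≤ |x - y| := by
  wlog h : x ≤ y generalizing x y
  · rw [abs_sub_comm, abs_sub_comm x y]
    exact this hy hx (le_of_not_ge h)
  rw [abs_of_nonneg (sub_nonneg.2 (Real.exp_le_exp.2 (by linarith))), abs_sub_comm,
    abs_of_nonneg (sub_nonneg.2 h)]
  have e : Real.exp (-y) = Real.exp (-x) * Real.exp (x - y) := by
    rw [← Real.exp_add]; ring_nf
  have h1 := Real.add_one_le_exp (x - y)
  have h2 : Real.exp (-x) ≤ 1 := Real.exp_le_one_iff.2 (by linarith)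
  rw [e]
  nlinarith [Real.exp_pos (-x)]

/-- The class of laws in which uniqueness is asserted, together with the functional equation. -/
def IsSol (μ a : ℝ) (F : Measure ℝ) : Prop :=
  IsProbabilityMeasure F ∧ F (Set.Iio 0) = 0 ∧ (∫ x, x ∂F) = μ ∧
    Integrable (fun x => x ^ 2) F ∧
    (∀ s : ℝ, 0 ≤ s → LS F s = Real.exp (-(sigmaT F (betaT a) μ s)))

lemma ae_nonneg_of_Iio {F : Measure ℝ} (h : F (Set.Iio 0) = 0) : ∀ᵐ x ∂F, 0 ≤ x := by
  rw [ae_iff]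
  convert h using 2
  ext x; simp

/-- Two solutions agree: a bound `|F̂ - Ĝ| ≤ C s²` self-improves to the constant `C / (a + 1)`,
and equality of the means together with finite second moments provides the initial bound. -/
lemma IsSol.unique {μ a : ℝ} (ha : 0 < a) {F G : Measure ℝ} (hF : IsSol μ a F)
    (hG : IsSol μ a G) : F = G := by
  obtain ⟨_, hF0, hFm, hF2, hFe⟩ := hF
  obtain ⟨_, hG0, hGm, hG2, hGe⟩ := hG
  have := betaT_finite ha
  replace hF0 := ae_nonneg_of_Iio hF0
  replace hG0 := ae_nonneg_of_Iio hG0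
  have hF1 := integrable_id_of_sq hF2
  have hG1 := integrable_id_of_sq hG2
  have hstep : ∀ C : ℝ, (∀ s, 0 ≤ s → |LS F s - LS G s| ≤ C * s ^ 2) →
      ∀ s, 0 ≤ s → |LS F s - LS G s| ≤ C * (1 / (a + 1)) * s ^ 2 := by
    intro C hC s hs
    rw [hFe s hs, hGe s hs]
    refine (abs_exp_neg_sub_le (sigma_nonneg hF0 hs) (sigma_nonneg hG0 hs)).trans ?_
    rw [sigmaT, sigmaT, ← integral_sub (sigma_integrable ha hF0 hF1 hFm hs)
      (sigma_integrable ha hG0 hG1 hGm hs), ← Real.norm_eq_abs]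
    have hid : Integrable (fun t : ℝ => t) (betaT a) := by
      refine Integrable.of_bound (C := 1) (by fun_prop) ?_
      filter_upwards [betaT_ae_mem a] with t ht
      rw [Real.norm_eq_abs, abs_of_pos ht.1]
      exact ht.2.le
    have hb := norm_integral_le_of_norm_le (hid.const_mul (C * s ^ 2))
      (f := fun t => (if t = 0 then μ * s else (1 - LS F (t * s)) / t)
        - (if t = 0 then μ * s else (1 - LS G (t * s)) / t)) (by
      filter_upwards [betaT_ae_mem a] with t ht
      rw [if_neg ht.1.ne', if_neg ht.1.ne', ← sub_div, norm_div, Real.norm_eq_abs,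
        Real.norm_eq_abs, abs_of_pos ht.1, div_le_iff₀ ht.1]
      have := hC (t * s) (mul_nonneg ht.1.le hs)
      rw [abs_sub_comm] at this
      calc _ = |LS G (t * s) - LS F (t * s)| := by congr 1; ring
        _ ≤ _ := this
        _ = _ := by ring)
    rw [integral_const_mul, betaT_mean ha] at hb
    linarith
  -- Each second moment bounds how far a transform exceeds its common linear part `1 - μ s`.
  set C₀ := (∫ x, x ^ 2 ∂F) + ∫ x, x ^ 2 ∂G with hC₀
  have hn : ∀ n : ℕ, ∀ s, 0 ≤ s → |LS F s - LS G s| ≤ C₀ * (1 / (a + 1)) ^ n * s ^ 2 := by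
    intro n
    induction n with
    | zero =>
      intro s hs
      have f1 := one_sub_le_LS hF0 hF1 hs
      have f2 := LS_le_quadratic hF0 hF2 hs
      have g1 := one_sub_le_LS hG0 hG1 hs
      have g2 := LS_le_quadratic hG0 hG2 hs
      rw [hFm] at f1 f2
      rw [hGm] at g1 g2
      have pF : 0 ≤ (∫ x, x ^ 2 ∂F) * s ^ 2 :=
        mul_nonneg (integral_nonneg fun x => sq_nonneg x) (sq_nonneg s)
      have pG : 0 ≤ (∫ x, x ^ 2 ∂G) * s ^ 2 :=
        mul_nonneg (integral_nonneg fun x => sq_nonneg x) (sq_nonneg s)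
      rw [pow_zero, mul_one, hC₀, add_mul, abs_le]
      constructor <;> linarith
    | succ n ih =>
      intro s hs
      have := hstep _ ih s hs
      rwa [pow_succ, ← mul_assoc]
  refine ext_of_LS_nat hF0 hG0 fun n => ?_
  have hlim : Filter.Tendsto (fun k : ℕ => C₀ * (1 / (a + 1)) ^ k * (n : ℝ) ^ 2) Filter.atTop
      (nhds (C₀ * 0 * (n : ℝ) ^ 2)) :=
    ((tendsto_pow_atTop_nhds_zero_of_lt_one (by positivity)
      ((div_lt_one (by linarith)).2 (by linarith))).const_mul C₀).mul_const _
  have hle := ge_of_tendsto' hlim fun k => hn k n (Nat.cast_nonneg n)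
  rw [mul_zero, zero_mul] at hle
  exact sub_eq_zero.1 (abs_nonpos_iff.1 hle)

/-! ### The Gamma law solves the equation -/

section gamma

variable {a b : ℝ}

lemma gammaMeas_integrable_iff (ha : 0 < a) (hb : 0 < b) (f : ℝ → ℝ) :
    Integrable f (gammaMeas a b) ↔ IntegrableOn (fun x =>
      x ^ (a - 1) * Real.exp (-(x / b)) / (Real.Gamma a * b ^ a) * f x) (Set.Ioi 0) := by
  rw [gammaMeas, integrable_withDensity_iff_integrable_smul₀' (by fun_prop) (by simp)]
  refine integrableOn_congr_fun (fun x hx => ?_) measurableSet_Ioi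
  have h0 : 0 ≤ x ^ (a - 1) * Real.exp (-(x / b)) / (Real.Gamma a * b ^ a) := by
    have := Real.Gamma_pos_of_pos ha
    have hx : 0 < x := hx
    positivity
  simp [ENNReal.toReal_ofReal h0]

lemma gammaMeas_integral (ha : 0 < a) (hb : 0 < b) (f : ℝ → ℝ) :
    ∫ x, f x ∂(gammaMeas a b) = ∫ x in Set.Ioi (0 : ℝ),
      x ^ (a - 1) * Real.exp (-(x / b)) / (Real.Gamma a * b ^ a) * f x := by
  rw [gammaMeas, integral_withDensity_eq_integral_toReal_smul (by fun_prop) (by simp)]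
  refine setIntegral_congr_fun measurableSet_Ioi fun x hx => ?_
  have h0 : 0 ≤ x ^ (a - 1) * Real.exp (-(x / b)) / (Real.Gamma a * b ^ a) := by
    have := Real.Gamma_pos_of_pos ha
    have hx : 0 < x := hx
    positivity
  simp [ENNReal.toReal_ofReal h0]

lemma integrableOn_rpow_mul_exp {p r : ℝ} (hp : 0 < p) (hr : 0 < r) :
    IntegrableOn (fun x : ℝ => x ^ (p - 1) * Real.exp (-(r * x))) (Set.Ioi 0) := by
  have := integrableOn_rpow_mul_exp_neg_mul_rpow (p := 1) (s := p - 1) (by linarith) one_pos hr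
  simpa using this

/-- Rewrites the Gamma density times `x ^ k * e^{-s x}` as a multiple of another such density. -/
lemma gamma_density_mul {x : ℝ} (hx : 0 < x) (k : ℕ) (s : ℝ) :
    x ^ (a - 1) * Real.exp (-(x / b)) / (Real.Gamma a * b ^ a) * (x ^ k * Real.exp (-(s * x)))
      = (Real.Gamma a * b ^ a)⁻¹ * (x ^ ((a + k) - 1) * Real.exp (-((1 / b + s) * x))) := by
  have e1 : x ^ ((a + k) - 1) = x ^ (a - 1) * x ^ k := by
    rw [← Real.rpow_natCast x k, ← Real.rpow_add hx]; ring_nf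
  have e2 : Real.exp (-((1 / b + s) * x)) = Real.exp (-(x / b)) * Real.exp (-(s * x)) := by
    rw [← Real.exp_add]; ring_nf
  rw [e1, e2]; ring

lemma gammaMeas_integrable_pow (ha : 0 < a) (hb : 0 < b) (k : ℕ) {s : ℝ} (hs : 0 ≤ s) :
    Integrable (fun x => x ^ k * Real.exp (-(s * x))) (gammaMeas a b) := by
  rw [gammaMeas_integrable_iff ha hb]
  refine (integrableOn_congr_fun (fun x hx => gamma_density_mul hx k s) measurableSet_Ioi).2 ?_
  exact (integrableOn_rpow_mul_exp (by positivity) (by positivity)).const_mul _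

lemma gammaMeas_moment (ha : 0 < a) (hb : 0 < b) (k : ℕ) {s : ℝ} (hs : 0 ≤ s) :
    ∫ x, x ^ k * Real.exp (-(s * x)) ∂(gammaMeas a b)
      = (Real.Gamma a * b ^ a)⁻¹ * ((1 / (1 / b + s)) ^ (a + k) * Real.Gamma (a + k)) := by
  rw [gammaMeas_integral ha hb, setIntegral_congr_fun measurableSet_Ioi
    (fun x hx => gamma_density_mul hx k s), integral_const_mul,
    Real.integral_rpow_mul_exp_neg_mul_Ioi (by positivity) (by positivity)]

lemma gammaMeas_LS (ha : 0 < a) (hb : 0 < b) {s : ℝ} (hs : 0 ≤ s) :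
    LS (gammaMeas a b) s = (1 + b * s) ^ (-a) := by
  have h := gammaMeas_moment ha hb 0 hs
  simp only [pow_zero, one_mul, Nat.cast_zero, add_zero] at h
  rw [LS, h]
  have hΓ := (Real.Gamma_pos_of_pos ha).ne'
  have hba := (Real.rpow_pos_of_pos hb a).ne'
  have e : 1 / (1 / b + s) = b * (1 + b * s)⁻¹ := by field_simp
  have hp : 0 < 1 + b * s := by positivity
  rw [e, Real.mul_rpow hb.le (by positivity), Real.inv_rpow hp.le, ← Real.rpow_neg hp.le]
  field_simp

lemma gammaMeas_prob (ha : 0 < a) (hb : 0 < b) : IsProbabilityMeasure (gammaMeas a b) := by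
  have h := gammaMeas_LS ha hb le_rfl
  simp [LS] at h
  constructor
  rw [measureReal_def] at h
  exact (ENNReal.toReal_eq_one_iff _).1 h

lemma gammaMeas_mean (ha : 0 < a) (hb : 0 < b) : ∫ x, x ∂(gammaMeas a b) = a * b := by
  have h := gammaMeas_moment ha hb 1 le_rfl
  simp only [pow_one, zero_mul, neg_zero, Real.exp_zero, mul_one, Nat.cast_one, add_zero,
    one_div_one_div] at h
  rw [h, Real.Gamma_add_one ha.ne', Real.rpow_add hb, Real.rpow_one]
  have hΓ := (Real.Gamma_pos_of_pos ha).ne'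
  have hba := (Real.rpow_pos_of_pos hb a).ne'
  field_simp

lemma gammaMeas_Iio : gammaMeas a b (Set.Iio 0) = 0 := by
  refine (withDensity_absolutelyContinuous _ _) ?_
  rw [Measure.restrict_apply measurableSet_Iio]
  convert measure_empty (μ := volume) using 2
  ext x; simp only [Set.mem_inter_iff, Set.mem_Iio, Set.mem_Ioi, Set.mem_empty_iff_false]
  constructor
  · rintro ⟨h1, h2⟩; linarith
  · simp

/-- With `u = (1 - t) / (1 + c t)` one has `du = -(1 + c) / (1 + c t)² dt`, so the integrand has the
antiderivative `-u^a / (1 + c)`. -/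
lemma beta_integral (ha : 0 < a) {c : ℝ} (hc : 0 ≤ c) :
    ∫ t in (0 : ℝ)..1, a * (1 - t) ^ (a - 1) * (1 + c * t) ^ (-a - 1) = 1 / (1 + c) := by
  have hpos : ∀ t ∈ Set.Icc (0 : ℝ) 1, 0 < 1 + c * t := fun t ht => by
    have := mul_nonneg hc ht.1; linarith
  have h := intervalIntegral.integral_eq_sub_of_hasDerivAt_of_le (a := 0) (b := 1)
    (f := fun t : ℝ => -((1 - t) ^ a * (1 + c * t) ^ (-a)) / (1 + c))
    (f' := fun t => a * (1 - t) ^ (a - 1) * (1 + c * t) ^ (-a - 1)) zero_le_one ?_ ?_ ?_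
  · rw [h]
    simp [Real.zero_rpow ha.ne', neg_div]
  · have c1 : ContinuousOn (fun t : ℝ => (1 - t) ^ a) (Set.Icc 0 1) :=
      ((continuous_const.sub continuous_id).rpow_const fun _ => Or.inr ha.le).continuousOn
    have c2 : ContinuousOn (fun t : ℝ => (1 + c * t) ^ (-a)) (Set.Icc 0 1) :=
      ContinuousOn.rpow_const (by fun_prop) fun t ht => Or.inl (hpos t ht).ne'
    exact (c1.mul c2).neg.div_const _
  · intro t ht
    have hp := hpos t (Set.Ioo_subset_Icc_self ht)
    have hd : HasDerivAt (fun t : ℝ => 1 - t) (-1) t := by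
      simpa using (hasDerivAt_id t).const_sub 1
    have hd2 : HasDerivAt (fun t : ℝ => 1 + c * t) c t := by
      simpa using ((hasDerivAt_id t).const_mul c).const_add 1
    have hq : 0 < 1 - t := by linarith [ht.2]
    have d1 := hd.rpow_const (p := a) (Or.inl hq.ne')
    have d2 := hd2.rpow_const (p := -a) (Or.inl hp.ne')
    refine ((d1.mul d2).neg.div_const (1 + c)).congr_deriv ?_
    have e1 : (1 - t) ^ a = (1 - t) ^ (a - 1) * (1 - t) := by
      rw [← Real.rpow_add_one hq.ne']; ring_nf
    have e2 : (1 + c * t) ^ (-a) = (1 + c * t) ^ (-a - 1) * (1 + c * t) := by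
      rw [← Real.rpow_add_one hp.ne']; ring_nf
    rw [e1, e2]
    have : (1 + c) ≠ 0 := by positivity
    field_simp
    ring
  · refine (betaDensity_intervalIntegrable ha).mul_continuousOn ?_
    rw [Set.uIcc_of_le zero_le_one]
    exact ContinuousOn.rpow_const (by fun_prop) fun t ht => Or.inl (hpos t ht).ne'

/-- With `F̂(s) = (1 + b s)^{-a}`, this is `(1 - F̂(ts)) / t = ∫₀ˢ -F̂'(tu) du`. -/
lemma one_sub_rpow_div (hb : 0 < b) {s t : ℝ} (hs : 0 ≤ s) (ht : 0 < t) :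
    (1 - (1 + b * (t * s)) ^ (-a)) / t
      = ∫ u in (0 : ℝ)..s, a * b * (1 + b * u * t) ^ (-a - 1) := by
  have hpos : ∀ u ∈ Set.Icc (0 : ℝ) s, 0 < 1 + b * u * t := fun u hu => by
    have := mul_nonneg (mul_nonneg hb.le hu.1) ht.le; linarith
  have h := intervalIntegral.integral_eq_sub_of_hasDerivAt_of_le (a := 0) (b := s)
    (f := fun u : ℝ => -(1 + b * u * t) ^ (-a) / t)
    (f' := fun u => a * b * (1 + b * u * t) ^ (-a - 1)) hs ?_ ?_ ?_
  · rw [h]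
    have : b * (t * s) = b * s * t := by ring
    simp [this]
    ring
  · exact (ContinuousOn.rpow_const (by fun_prop) fun u hu => Or.inl (hpos u hu).ne').neg.div_const _
  · intro u hu
    have hp := hpos u (Set.Ioo_subset_Icc_self hu)
    have hd : HasDerivAt (fun u : ℝ => 1 + b * u * t) (b * t) u := by
      simpa using (((hasDerivAt_id u).const_mul b).mul_const t).const_add 1
    refine ((hd.rpow_const (p := -a) (Or.inl hp.ne')).neg.div_const t).congr_deriv ?_
    field_simp
  · refine ContinuousOn.intervalIntegrable_of_Icc hs ?_
    exact continuousOn_const.mul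
      (ContinuousOn.rpow_const (by fun_prop) fun u hu => Or.inl (hpos u hu).ne')

lemma integral_inv_affine (hb : 0 < b) {s : ℝ} (hs : 0 ≤ s) :
    ∫ u in (0 : ℝ)..s, a * b * (1 / (1 + b * u)) = a * Real.log (1 + b * s) := by
  have hpos : ∀ u ∈ Set.Icc (0 : ℝ) s, 0 < 1 + b * u := fun u hu => by
    have := mul_nonneg hb.le hu.1; linarith
  have h := intervalIntegral.integral_eq_sub_of_hasDerivAt_of_le (a := 0) (b := s)
    (f := fun u : ℝ => a * Real.log (1 + b * u))
    (f' := fun u => a * b * (1 / (1 + b * u))) hs ?_ ?_ ?_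
  · rw [h]; simp
  · exact continuousOn_const.mul (ContinuousOn.log (by fun_prop) fun u hu => (hpos u hu).ne')
  · intro u hu
    have hp := hpos u (Set.Ioo_subset_Icc_self hu)
    have hd : HasDerivAt (fun u : ℝ => 1 + b * u) b u := by
      simpa using ((hasDerivAt_id u).const_mul b).const_add 1
    refine ((hd.log hp.ne').const_mul a).congr_deriv ?_
    ring
  · refine ContinuousOn.intervalIntegrable_of_Icc hs ?_
    exact continuousOn_const.mul
      (ContinuousOn.div continuousOn_const (by fun_prop) fun u hu => (hpos u hu).ne')

/-- For the Gamma law, `σ(s) = a log (1 + b s)`: write `(1 - F̂(ts))/t` as an integral of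
`-F̂'(tu)` over `u ∈ [0,s]` and exchange the two integrations. -/
lemma gammaMeas_sigma (ha : 0 < a) (hb : 0 < b) (μ : ℝ) {s : ℝ} (hs : 0 ≤ s) :
    sigmaT (gammaMeas a b) (betaT a) μ s = a * Real.log (1 + b * s) := by
  rw [sigmaT, betaT_integral ha]
  have e1 : ∀ t ∈ Set.Ioo (0 : ℝ) 1, a * (1 - t) ^ (a - 1) *
      (if t = 0 then μ * s else (1 - LS (gammaMeas a b) (t * s)) / t)
      = ∫ u in Set.Ioc 0 s, a * (1 - t) ^ (a - 1) * (a * b * (1 + b * u * t) ^ (-a - 1)) := by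
    intro t ht
    rw [if_neg ht.1.ne', gammaMeas_LS ha hb (mul_nonneg ht.1.le hs), one_sub_rpow_div hb hs ht.1,
      intervalIntegral.integral_of_le hs,
      integral_const_mul (a * (1 - t) ^ (a - 1))]
  rw [setIntegral_congr_fun measurableSet_Ioo e1, integral_integral_swap]
  · rw [← integral_inv_affine hb hs, intervalIntegral.integral_of_le hs]
    refine setIntegral_congr_fun measurableSet_Ioc fun u hu => ?_
    have h := beta_integral ha (mul_nonneg hb.le hu.1.le)
    rw [intervalIntegral.integral_of_le zero_le_one, integral_Ioc_eq_integral_Ioo] at h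
    rw [← h, ← integral_const_mul]
    refine integral_congr_ae (ae_of_all _ fun t => ?_)
    simp only
    ring
  -- On the domain of integration the kernel `(1 + b u t)^{-a-1}` is at most `1`.
  · have hint : Integrable (fun p : ℝ × ℝ => a * (1 - p.1) ^ (a - 1) * (a * b))
        ((volume.restrict (Set.Ioo (0 : ℝ) 1)).prod (volume.restrict (Set.Ioc 0 s))) :=
      Integrable.mul_prod (f := fun t : ℝ => a * (1 - t) ^ (a - 1)) (g := fun _ : ℝ => a * b)
        (betaDensity_integrableOn ha) (integrable_const _)
    refine hint.mono (Measurable.aestronglyMeasurable (by unfold Function.uncurry; fun_prop)) ?_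
    rw [Measure.prod_restrict]
    filter_upwards [ae_restrict_mem (measurableSet_Ioo.prod measurableSet_Ioc)] with p hp
    obtain ⟨h1, h2⟩ := hp
    have hge : 1 ≤ 1 + b * p.2 * p.1 := by
      have := mul_nonneg (mul_nonneg hb.le h2.1.le) h1.1.le
      linarith
    simp only [Function.uncurry]
    rw [norm_mul, norm_mul (a * (1 - p.1) ^ (a - 1))]
    refine mul_le_mul_of_nonneg_left ?_ (norm_nonneg _)
    rw [norm_mul (a * b)]
    refine mul_le_of_le_one_right (norm_nonneg _) ?_
    rw [Real.norm_eq_abs, abs_of_nonneg (Real.rpow_nonneg (by linarith) _)]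
    exact Real.rpow_le_one_of_one_le_of_nonpos hge (by linarith)

lemma gammaMeas_isSol {μ : ℝ} (hμ : 0 < μ) (ha : 0 < a) : IsSol μ a (gammaMeas a (μ / a)) := by
  have hb : 0 < μ / a := by positivity
  refine ⟨gammaMeas_prob ha hb, gammaMeas_Iio, ?_, ?_, fun s hs => ?_⟩
  · rw [gammaMeas_mean ha hb]; field_simp
  · simpa using gammaMeas_integrable_pow ha hb 2 le_rfl
  · have hp : 0 < 1 + μ / a * s := by positivity
    rw [gammaMeas_LS ha hb hs, gammaMeas_sigma ha hb μ hs, Real.rpow_def_of_pos hp]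
    ring_nf

end gamma

/-- Example 2(c): with `F_T` the beta-type distribution with parameter `a > 0`, among
probability distributions `F` on `[0,∞)` with mean `μ` and finite second moment, the
Gamma distribution with shape `a` and scale `b = μ/a` is the unique one satisfying
`F̂(s) = exp(−σ(s))` for all `s ≥ 0`. -/
theorem stmt19 (μ a : ℝ) (hμ : 0 < μ) (ha : 0 < a) :
    ∀ F : Measure ℝ,
      (IsProbabilityMeasure F ∧ F (Set.Iio 0) = 0 ∧ (∫ x, x ∂F) = μ ∧
        Integrable (fun x => x ^ 2) F ∧
        (∀ s : ℝ, 0 ≤ s → LS F s = Real.exp (-(sigmaT F (betaT a) μ s)))) ↔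
      F = gammaMeas a (μ / a) := by
  intro F
  constructor
  · exact fun h => IsSol.unique ha h (gammaMeas_isSol hμ ha)
  · rintro rfl
    exact gammaMeas_isSol hμ ha
end
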